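/- Let α ∈ (2,3), n ≥ 2, and let γ₀ ∈ H^{(1+α)/2,2}(ℝ/ℤ,ℝⁿ) be injective and regular. Then there exist an open neighborhood U of γ₀ in H^{(1+α)/2,2}(ℝ/ℤ,ℝⁿ) consisting of injective regular curves and a constant C < ∞ with the following property: for every δ ∈ [0,1] and every set X_δ ⊂ H^{(1+α)/2,2}(ℝ/ℤ,ℝⁿ) satisfying limsup_{ε→0} sup_{γ∈X_δ} (∬_{(ℝ/ℤ)×[−ε,ε]} |γ'(u+w)−γ'(u)|²/|w|^α dw du)^{1/2} ≤ δ, one has limsup_{ε₁,ε₂→0} Lip_{U∩X_δ}(E^α_{ε₁} − E^α_{ε₂}) ≤ C·δ, where Lip_Y(F) := sup{ |F(f)−F(g)|/‖f−g‖_{H^{(1+α)/2,2}} : f,g ∈ Y, f ≠ g }. -/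

import Mathlib

open MeasureTheory Filter Set
open scoped RealInnerProductSpace ENNReal Topology

noncomputable section

/-- `ℝⁿ` -/
abbrev Rn (n : ℕ) := EuclideanSpace ℝ (Fin n)

variable {n : ℕ}

/-- A 1-periodic curve is injective as a map on `ℝ/ℤ`. -/
def PerInjective (γ : ℝ → Rn n) : Prop :=
  ∀ u v : ℝ, γ u = γ v → ∃ k : ℤ, v = u + k

/-- `γ` is a regular curve: `γ'(u) ≠ 0` for all `u`. -/
def RegularCurve (γ : ℝ → Rn n) : Prop := ∀ u : ℝ, deriv γ u ≠ 0

/-- `γ` is parametrized by arc-length: `|γ'(u)| = 1` for all `u`. -/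
def ArcLengthParam (γ : ℝ → Rn n) : Prop := ∀ u : ℝ, ‖deriv γ u‖ = 1

/-- The length `L(γ) = ∫₀¹ |γ'(θ)| dθ` of the closed curve `γ`. -/
def curveLen (γ : ℝ → Rn n) : ℝ := ∫ θ in (0:ℝ)..1, ‖deriv γ θ‖

/-- The arc length `L(γ|_{[u,u+w]}) = |∫_u^{u+w} |γ'(θ)| dθ|`. -/
def arcLen (γ : ℝ → Rn n) (u w : ℝ) : ℝ := |∫ θ in u..(u + w), ‖deriv γ θ‖|

/-- The intrinsic distance `d_γ(u+w,u)`. -/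
def idist (γ : ℝ → Rn n) (u w : ℝ) : ℝ :=
  min (arcLen γ u w) (curveLen γ - arcLen γ u w)

/-- The integrand of the O'Hara energy `E^α`. -/
def ohIntegrand (α : ℝ) (γ : ℝ → Rn n) (u w : ℝ) : ℝ :=
  (1 / ‖γ (u + w) - γ u‖ ^ α - 1 / idist γ u w ^ α) * ‖deriv γ (u + w)‖ * ‖deriv γ u‖

/-- The O'Hara energy `E^α`, with values in `[0,∞]`. -/
def oharaE (α : ℝ) (γ : ℝ → Rn n) : ℝ≥0∞ :=
  ∫⁻ u in Ioc (0:ℝ) 1, ∫⁻ w in Ioo (-(1:ℝ)/2) (1/2), ENNReal.ofReal (ohIntegrand α γ u w)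

/-- The O'Hara energy `E^α` as a real number. -/
def oharaER (α : ℝ) (γ : ℝ → Rn n) : ℝ := (oharaE α γ).toReal

/-- `[−1/2,−ε] ∪ [ε,1/2]`, the `w`-section of `U_ε`. -/
def Wset (ε : ℝ) : Set ℝ := Icc (-(1:ℝ)/2) (-ε) ∪ Icc ε (1/2)

/-- The truncated O'Hara energy `E^α_ε`, an integral over `U_ε`. -/
def oharaEeps (α ε : ℝ) (γ : ℝ → Rn n) : ℝ :=
  ∫ u in Ioc (0:ℝ) 1, ∫ w in Wset ε, ohIntegrand α γ u w

/-- `F` has directional (Gâteaux) derivative `d` at `γ` in direction `h`. -/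
def HasDirDeriv (F : (ℝ → Rn n) → ℝ) (γ h : ℝ → Rn n) (d : ℝ) : Prop :=
  Tendsto (fun τ : ℝ => (F (γ + τ • h) - F γ) / τ) (𝓝[≠] (0:ℝ)) (𝓝 d)

/-- Squared Gagliardo seminorm `[f]²_{H^{s,2}}` of a 1-periodic map. -/
def gagliardoSq (s : ℝ) {E : Type*} [NormedAddCommGroup E] (f : ℝ → E) : ℝ≥0∞ :=
  ∫⁻ u in Ioc (0:ℝ) 1, ∫⁻ w in Ioo (-(1:ℝ)/2) (1/2),
    ENNReal.ofReal (‖f (u + w) - f u‖ ^ 2 / |w| ^ (1 + 2 * s))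

/-- Membership in the fractional Sobolev space `H^{1+σ,2}(ℝ/ℤ,ℝⁿ)`, `σ ∈ (0,1)`:
a 1-periodic `C¹` function whose derivative has finite Gagliardo seminorm of order `σ`. -/
def MemH1 (σ : ℝ) (γ : ℝ → Rn n) : Prop :=
  Function.Periodic γ 1 ∧ ContDiff ℝ 1 γ ∧ gagliardoSq σ (deriv γ) < ⊤

/-- The norm of `H^{1+σ,2}(ℝ/ℤ,ℝⁿ)`. -/
def H1Norm (σ : ℝ) (γ : ℝ → Rn n) : ℝ :=
  Real.sqrt (∫ u in Ioc (0:ℝ) 1, (‖γ u‖ ^ 2 + ‖deriv γ u‖ ^ 2)) +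
    Real.sqrt ((gagliardoSq σ (deriv γ)).toReal)

/-- Membership of a 1-periodic map in `L²(ℝ/ℤ)`. -/
def MemL2per {E : Type*} [NormedAddCommGroup E] (f : ℝ → E) : Prop :=
  Function.Periodic f 1 ∧ AEStronglyMeasurable f (volume : Measure ℝ) ∧
    IntegrableOn (fun u => ‖f u‖ ^ 2) (Ioc (0:ℝ) 1) volume

/-- Membership in the fractional Sobolev space `H^{s,2}(ℝ/ℤ)`, `s ∈ (0,1)`. -/
def MemHs0 (s : ℝ) {E : Type*} [NormedAddCommGroup E] (f : ℝ → E) : Prop :=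
  MemL2per f ∧ gagliardoSq s f < ⊤

/-- The norm of `H^{s,2}(ℝ/ℤ)` for `s ∈ (0,1)`: `‖f‖_{L²} + [f]_{H^{s,2}}`. -/
def Hs0Norm (s : ℝ) {E : Type*} [NormedAddCommGroup E] (f : ℝ → E) : ℝ :=
  Real.sqrt (∫ u in Ioc (0:ℝ) 1, ‖f u‖ ^ 2) + Real.sqrt ((gagliardoSq s f).toReal)

/-- The `k`-th Fourier coefficient (`j`-th component) of a 1-periodic curve. -/
def fCoef (γ : ℝ → Rn n) (k : ℤ) (j : Fin n) : ℂ :=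
  ∫ u in (0:ℝ)..1, (γ u j : ℂ) * Complex.exp ((-2) * (Real.pi : ℂ) * Complex.I * (k : ℂ) * (u : ℂ))

/-- Membership in `H^{s,2}(ℝ/ℤ,ℝⁿ)` via the Fourier characterization:
`((1+|k|²)^{s/2} γ̂(k))_k ∈ ℓ²`. -/
def MemHF (s : ℝ) (γ : ℝ → Rn n) : Prop :=
  Function.Periodic γ 1 ∧ Continuous γ ∧
    Summable (fun k : ℤ => (1 + (k : ℝ) ^ 2) ^ s * ∑ j, ‖fCoef γ k j‖ ^ 2)

/-- The squared Fourier norm of `H^{s,2}(ℝ/ℤ,ℝⁿ)`. -/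
def fNormSq (s : ℝ) (γ : ℝ → Rn n) : ℝ :=
  ∑' k : ℤ, (1 + (k : ℝ) ^ 2) ^ s * ∑ j, ‖fCoef γ k j‖ ^ 2

/-- C¹-norm of a 1-periodic map. -/
def c1Norm (f : ℝ → Rn n) : ℝ := ⨆ u : Icc (0:ℝ) 1, (‖f u.1‖ + ‖deriv f u.1‖)

/-- The integrand of `Q(γ,h)`. -/
def Qintegrand (α : ℝ) (γ h : ℝ → Rn n) (u w : ℝ) : ℝ :=
  ⟪deriv γ u, deriv h u⟫ / |w| ^ α
    - ⟪γ (u + w) - γ u, h (u + w) - h u⟫ / |w| ^ (α + 2)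

/-- The integrand of `R(γ,h)`. -/
def Rintegrand (α : ℝ) (γ h : ℝ → Rn n) (u w : ℝ) : ℝ :=
  2 * ⟪deriv γ u, deriv h u⟫ * (1 / ‖γ (u + w) - γ u‖ ^ α - 1 / |w| ^ α)
    - α * ⟪γ (u + w) - γ u, h (u + w) - h u⟫ *
        (1 / ‖γ (u + w) - γ u‖ ^ (α + 2) - 1 / |w| ^ (α + 2))

/-- `R(γ,h)`, an absolutely convergent double integral over `(ℝ/ℤ) × [−1/2,1/2]`. -/
def Rval (α : ℝ) (γ h : ℝ → Rn n) : ℝ :=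
  ∫ p in (Ioc (0:ℝ) 1) ×ˢ (Icc (-(1:ℝ)/2) (1/2)), Rintegrand α γ h p.1 p.2

lemma abs_rpow_neg_sub_le {m β : ℝ} (hm : 0 < m) (hβ : 0 < β) {z z' : ℝ} (hz : m ≤ z)
    (hz' : m ≤ z') : |z ^ (-β) - z' ^ (-β)| ≤ β * m ^ (-β - 1) * |z - z'| := by
  have := (convex_Ici m).norm_image_sub_le_of_norm_hasDerivWithin_le
    (f := fun z : ℝ => z ^ (-β)) (f' := fun z => -β * z ^ (-β - 1)) (C := β * m ^ (-β - 1))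
    (fun x hx => (Real.hasDerivAt_rpow_const
      (Or.inl (hm.trans_le hx).ne')).hasDerivWithinAt)
    (fun x hx => by
      have hx0 : 0 < x := hm.trans_le hx
      rw [norm_mul, norm_neg, Real.norm_of_nonneg hβ.le,
        Real.norm_of_nonneg (Real.rpow_nonneg hx0.le _)]
      exact mul_le_mul_of_nonneg_left
        (Real.rpow_le_rpow_of_nonpos hm hx (by linarith)) hβ.le) hz' hz
  simpa [Real.norm_eq_abs] using this

/-- Second differences of a negative power, bounded by second differences of the arguments. -/
lemma abs_rpow_neg_sub_sub_le {m β : ℝ} (hm : 0 < m) (hβ : 0 < β) {x y x' y' : ℝ}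
    (hx : m ≤ x) (hy : m ≤ y) (hx' : m ≤ x') (hy' : m ≤ y') :
    |(x ^ (-β) - y ^ (-β)) - (x' ^ (-β) - y' ^ (-β))| ≤
      β * m ^ (-β - 1) * |(x - y) - (x' - y')| +
        β * ((β + 1) * m ^ (-β - 2)) * |x - y| * (|x - x'| + |y - y'|) := by
  have hmem : ∀ {p q : ℝ}, m ≤ p → m ≤ q → ∀ t ∈ Icc (0 : ℝ) 1, m ≤ q + t * (p - q) := by
    intro p q hp hq t ht
    nlinarith [mul_nonneg ht.1 (sub_nonneg.2 hp), mul_nonneg (sub_nonneg.2 ht.2) (sub_nonneg.2 hq)]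
  have hd : ∀ {p q : ℝ}, m ≤ p → m ≤ q → ∀ t ∈ Icc (0 : ℝ) 1,
      HasDerivAt (fun t : ℝ => (q + t * (p - q)) ^ (-β))
        ((p - q) * (-β) * (q + t * (p - q)) ^ (-β - 1)) t := by
    intro p q hp hq t ht
    have h1 : HasDerivAt (fun t : ℝ => q + t * (p - q)) (p - q) t := by
      simpa using ((hasDerivAt_id t).mul_const (p - q)).const_add q
    exact h1.rpow_const (Or.inl (hm.trans_le (hmem hp hq t ht)).ne')
  have := (convex_Icc (0 : ℝ) 1).norm_image_sub_le_of_norm_hasDerivWithin_le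
    (f := fun t : ℝ => (y + t * (x - y)) ^ (-β) - (y' + t * (x' - y')) ^ (-β))
    (C := β * m ^ (-β - 1) * |(x - y) - (x' - y')| +
        β * ((β + 1) * m ^ (-β - 2)) * |x - y| * (|x - x'| + |y - y'|))
    (fun t ht => ((hd hx hy t ht).sub (hd hx' hy' t ht)).hasDerivWithinAt)
    (fun t ht => by
      have hz := hmem hx hy t ht
      have hz' := hmem hx' hy' t ht
      set z := y + t * (x - y) with hzdef
      set z' := y' + t * (x' - y') with hz'def
      have e : (x - y) * -β * z ^ (-β - 1) - (x' - y') * -β * z' ^ (-β - 1) =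
          -(β * (x - y) * (z ^ (-(β + 1)) - z' ^ (-(β + 1)))
            + β * z' ^ (-(β + 1)) * ((x - y) - (x' - y'))) := by
        rw [show -β - 1 = -(β + 1) by ring]; ring
      rw [e, norm_neg]
      refine (norm_add_le _ _).trans ?_
      have h1 := abs_rpow_neg_sub_le hm (by linarith : 0 < β + 1) hz hz'
      have h2 : |z - z'| ≤ |x - x'| + |y - y'| := by
        have : z - z' = t * (x - x') + (1 - t) * (y - y') := by rw [hzdef, hz'def]; ring
        rw [this]
        refine (abs_add_le _ _).trans ?_
        rw [abs_mul, abs_mul, abs_of_nonneg ht.1, abs_of_nonneg (sub_nonneg.2 ht.2)]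
        have := abs_nonneg (x - x')
        have := abs_nonneg (y - y')
        nlinarith [ht.1, ht.2]
      have h3 : z' ^ (-(β + 1)) ≤ m ^ (-(β + 1)) :=
        Real.rpow_le_rpow_of_nonpos hm hz' (by linarith)
      have h3' : 0 ≤ z' ^ (-(β + 1)) := Real.rpow_nonneg (hm.le.trans hz') _
      have h4 : 0 ≤ m ^ (-β - 2) := Real.rpow_nonneg hm.le _
      rw [show -(β + 1) - 1 = -β - 2 by ring] at h1
      simp only [Real.norm_eq_abs, abs_mul, abs_of_pos hβ, abs_of_nonneg h3']
      rw [add_comm, show -β - 1 = -(β + 1) by ring]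
      refine add_le_add (by gcongr) ?_
      calc β * |x - y| * |z ^ (-(β + 1)) - z' ^ (-(β + 1))|
          ≤ β * |x - y| * ((β + 1) * m ^ (-β - 2) * (|x - x'| + |y - y'|)) := by
            gcongr
            exact h1.trans (by gcongr)
        _ = _ := by ring)
    (left_mem_Icc.2 zero_le_one) (right_mem_Icc.2 zero_le_one)
  simp only [one_mul, zero_mul, add_zero, sub_zero, norm_one, mul_one, add_sub_cancel,
    Real.norm_eq_abs] at this
  convert this using 2
  ring

lemma abs_norm_sub_norm_sub_le {E : Type*} [NormedAddCommGroup E] [InnerProductSpace ℝ E]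
    {a b a' b' : E} {c N : ℝ} (hc : 0 < c) (ha : c ≤ ‖a‖) (hb : c ≤ ‖b‖) (hN : ‖a' - b'‖ ≤ N) :
    |(‖a‖ - ‖a'‖) - (‖b‖ - ‖b'‖)| ≤
      ‖(a - a') - (b - b')‖ + N / c * (‖a - a'‖ + ‖b - b'‖) := by
  have hS : 0 < ‖a‖ + ‖b‖ := by linarith
  have key : ∀ x y : E, (‖x‖ + ‖y‖) * (‖x‖ - ‖y‖) = ⟪x - y, x + y⟫ := by
    intro x y
    rw [inner_sub_left, inner_add_right, inner_add_right, real_inner_self_eq_norm_sq,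
      real_inner_self_eq_norm_sq, real_inner_comm x y]
    ring
  have e : (‖a‖ + ‖b‖) * ((‖a‖ - ‖a'‖) - (‖b‖ - ‖b'‖)) =
      ⟪(a - a') - (b - b'), a + b⟫ + ⟪a' - b', (a - a') + (b - b')⟫
        - ((‖a‖ - ‖a'‖) + (‖b‖ - ‖b'‖)) * (‖a'‖ - ‖b'‖) := by
    have h1 := key a b
    have h2 := key a' b'
    have h3 : ⟪(a - a') - (b - b'), a + b⟫ + ⟪a' - b', (a - a') + (b - b')⟫ =
        ⟪a - b, a + b⟫ - ⟪a' - b', a' + b'⟫ := by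
      simp only [inner_sub_left, inner_add_right, inner_sub_right]
      ring
    rw [h3]
    linear_combination h1 - h2
  have n1 : |⟪(a - a') - (b - b'), a + b⟫| ≤ ‖(a - a') - (b - b')‖ * (‖a‖ + ‖b‖) :=
    (abs_real_inner_le_norm _ _).trans (by gcongr; exact norm_add_le _ _)
  have n2 : |⟪a' - b', (a - a') + (b - b')⟫| ≤ N * (‖a - a'‖ + ‖b - b'‖) :=
    (abs_real_inner_le_norm _ _).trans (mul_le_mul hN (norm_add_le _ _) (norm_nonneg _)
      ((norm_nonneg _).trans hN))
  have n3 : |((‖a‖ - ‖a'‖) + (‖b‖ - ‖b'‖)) * (‖a'‖ - ‖b'‖)| ≤ (‖a - a'‖ + ‖b - b'‖) * N := by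
    rw [abs_mul]
    refine mul_le_mul ((abs_add_le _ _).trans (add_le_add (abs_norm_sub_norm_le _ _)
      (abs_norm_sub_norm_le _ _))) ((abs_norm_sub_norm_le _ _).trans hN) (abs_nonneg _)
      (by positivity)
  have n4 : (‖a‖ + ‖b‖) * |(‖a‖ - ‖a'‖) - (‖b‖ - ‖b'‖)| ≤
      ‖(a - a') - (b - b')‖ * (‖a‖ + ‖b‖) + 2 * N * (‖a - a'‖ + ‖b - b'‖) := by
    rw [← abs_of_pos hS, ← abs_mul, e, abs_of_pos hS]
    refine (abs_sub _ _).trans ?_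
    have := abs_add_le ⟪(a - a') - (b - b'), a + b⟫ ⟪a' - b', (a - a') + (b - b')⟫
    linarith
  have hN0 : 0 ≤ N := (norm_nonneg _).trans hN
  have n5 : 2 * N * (‖a - a'‖ + ‖b - b'‖) ≤
      (‖a‖ + ‖b‖) * (N / c * (‖a - a'‖ + ‖b - b'‖)) := by
    have : 2 * N ≤ (‖a‖ + ‖b‖) * (N / c) := by
      rw [mul_div_assoc', le_div_iff₀ hc]; nlinarith
    nlinarith [norm_nonneg (a - a'), norm_nonneg (b - b')]
  refine le_of_mul_le_mul_left (n4.trans ?_) hS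
  linarith

lemma abs_norm_sq_sub_le {F : Type*} [NormedAddCommGroup F] {x y : F} {l : ℝ} (hl : 0 < l) :
    |‖x‖ ^ 2 - ‖y‖ ^ 2| ≤ l * ‖x - y‖ ^ 2 + (‖x‖ ^ 2 + ‖y‖ ^ 2) / l := by
  have h1 := abs_norm_sub_norm_le x y
  have h2 : |‖x‖ ^ 2 - ‖y‖ ^ 2| ≤ ‖x - y‖ * (‖x‖ + ‖y‖) := by
    rw [sq_sub_sq, abs_mul, abs_of_nonneg (by positivity : 0 ≤ ‖x‖ + ‖y‖), mul_comm]
    gcongr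
  refine h2.trans ?_
  have e : l * ‖x - y‖ ^ 2 + (‖x‖ ^ 2 + ‖y‖ ^ 2) / l - ‖x - y‖ * (‖x‖ + ‖y‖) =
      ((l * ‖x - y‖ - (‖x‖ + ‖y‖) / 2) ^ 2 + (3 * ‖x‖ ^ 2 + 3 * ‖y‖ ^ 2 - 2 * ‖x‖ * ‖y‖) / 4) / l := by
    field_simp; ring
  have : 0 ≤ l * ‖x - y‖ ^ 2 + (‖x‖ ^ 2 + ‖y‖ ^ 2) / l - ‖x - y‖ * (‖x‖ + ‖y‖) := by
    rw [e]
    refine div_nonneg (add_nonneg (sq_nonneg _) ?_) hl.le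
    nlinarith [sq_nonneg (‖x‖ - ‖y‖), sq_nonneg ‖x‖, sq_nonneg ‖y‖]
  linarith

section UnitInterval

variable {F : Type*} [NormedAddCommGroup F]

lemma sq_integral_norm_le {p : ℝ → ℝ} (hp : Continuous p) :
    (∫ s in (0:ℝ)..1, p s) ^ 2 ≤ ∫ s in (0:ℝ)..1, p s ^ 2 := by
  set m := ∫ s in (0:ℝ)..1, p s
  have h : 0 ≤ ∫ s in (0:ℝ)..1, (p s - m) ^ 2 :=
    intervalIntegral.integral_nonneg zero_le_one fun s _ => sq_nonneg _
  have e : ∫ s in (0:ℝ)..1, (p s - m) ^ 2 = (∫ s in (0:ℝ)..1, p s ^ 2) - m ^ 2 := by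
    have : ∀ s, (p s - m) ^ 2 = p s ^ 2 - 2 * m * p s + m ^ 2 := fun s => by ring
    simp_rw [this]
    rw [intervalIntegral.integral_add, intervalIntegral.integral_sub,
      intervalIntegral.integral_const_mul, intervalIntegral.integral_const]
    · simp; ring
    all_goals exact Continuous.intervalIntegrable (by fun_prop) _ _
  linarith

lemma abs_integral_norm_sq_sub_le {P R : ℝ → F} (hP : Continuous P) (hR : Continuous R) {l : ℝ}
    (hl : 0 < l) :
    |(∫ s in (0:ℝ)..1, ‖P s‖ ^ 2) - ∫ s in (0:ℝ)..1, ‖R s‖ ^ 2| ≤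
      l * (∫ s in (0:ℝ)..1, ‖P s - R s‖ ^ 2) +
        ((∫ s in (0:ℝ)..1, ‖P s‖ ^ 2) + ∫ s in (0:ℝ)..1, ‖R s‖ ^ 2) / l := by
  have i1 : IntervalIntegrable (fun s => ‖P s‖ ^ 2) volume 0 1 :=
    Continuous.intervalIntegrable (by fun_prop) _ _
  have i2 : IntervalIntegrable (fun s => ‖R s‖ ^ 2) volume 0 1 :=
    Continuous.intervalIntegrable (by fun_prop) _ _
  have i3 : IntervalIntegrable (fun s => ‖P s - R s‖ ^ 2) volume 0 1 :=
    Continuous.intervalIntegrable (by fun_prop) _ _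
  rw [← intervalIntegral.integral_sub i1 i2, ← intervalIntegral.integral_add i1 i2,
    ← intervalIntegral.integral_const_mul, ← intervalIntegral.integral_div,
    ← intervalIntegral.integral_add (i3.const_mul l) ((i1.add i2).div_const l)]
  refine (intervalIntegral.abs_integral_le_integral_abs zero_le_one).trans ?_
  refine intervalIntegral.integral_mono_on zero_le_one ?_ ?_ fun s _ => abs_norm_sq_sub_le hl
  · exact (i1.sub i2).abs
  · exact (i3.const_mul l).add ((i1.add i2).div_const l)

variable [NormedSpace ℝ F]

lemma norm_integral_sq_le {P : ℝ → F} (hP : Continuous P) :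
    ‖∫ s in (0:ℝ)..1, P s‖ ^ 2 ≤ ∫ s in (0:ℝ)..1, ‖P s‖ ^ 2 :=
  (pow_le_pow_left₀ (norm_nonneg _)
    (intervalIntegral.norm_integral_le_integral_norm zero_le_one) 2).trans
    (sq_integral_norm_le hP.norm)

lemma abs_norm_integral_sq_sub_le {P R : ℝ → F} (hP : Continuous P) (hR : Continuous R) {l : ℝ}
    (hl : 0 < l) :
    |‖∫ s in (0:ℝ)..1, P s‖ ^ 2 - ‖∫ s in (0:ℝ)..1, R s‖ ^ 2| ≤
      l * (∫ s in (0:ℝ)..1, ‖P s - R s‖ ^ 2) +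
        ((∫ s in (0:ℝ)..1, ‖P s‖ ^ 2) + ∫ s in (0:ℝ)..1, ‖R s‖ ^ 2) / l := by
  refine (abs_norm_sq_sub_le hl).trans ?_
  rw [← intervalIntegral.integral_sub (hP.intervalIntegrable _ _) (hR.intervalIntegrable _ _)]
  have := norm_integral_sq_le (hP.sub hR)
  have := norm_integral_sq_le hP
  have := norm_integral_sq_le hR
  gcongr
  assumption

end UnitInterval

section ChordArc

variable {E : Type*} [NormedAddCommGroup E]

/-- The mean square oscillation of `a` on `[0,1]` around its initial value. -/
def oscSq (a : ℝ → E) : ℝ := ∫ s in (0:ℝ)..1, ‖a s - a 0‖ ^ 2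

lemma oscSq_nonneg (a : ℝ → E) : 0 ≤ oscSq a :=
  intervalIntegral.integral_nonneg zero_le_one fun _ _ => sq_nonneg _

lemma integral_norm_sub_norm_sq_le {a : ℝ → E} (ha : Continuous a) :
    ∫ s in (0:ℝ)..1, ‖‖a s‖ - ‖a 0‖‖ ^ 2 ≤ oscSq a := by
  refine intervalIntegral.integral_mono_on zero_le_one
    (Continuous.intervalIntegrable (by fun_prop) _ _)
    (Continuous.intervalIntegrable (by fun_prop) _ _) fun s _ => ?_
  exact pow_le_pow_left₀ (norm_nonneg _) (abs_norm_sub_norm_le _ _) 2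

variable [InnerProductSpace ℝ E]

/-- Squared arc length minus squared chord length of a curve over `[0,1]` with velocity `a`. -/
def arcChordDefect (a : ℝ → E) : ℝ :=
  (∫ s in (0:ℝ)..1, ‖a s‖) ^ 2 - ‖∫ s in (0:ℝ)..1, a s‖ ^ 2

lemma arcChordDefect_nonneg (a : ℝ → E) : 0 ≤ arcChordDefect a :=
  sub_nonneg.2 (pow_le_pow_left₀ (norm_nonneg _)
    (intervalIntegral.norm_integral_le_integral_norm zero_le_one) 2)

/-- The rescaled O'Hara integrand of a curve over `[0,1]` with velocity `a`. -/
def unitOhara (α : ℝ) (a : ℝ → E) : ℝ :=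
  (1 / ‖∫ s in (0:ℝ)..1, a s‖ ^ α - 1 / (∫ s in (0:ℝ)..1, ‖a s‖) ^ α) * ‖a 1‖ * ‖a 0‖

lemma unitOhara_eq (α : ℝ) (a : ℝ → E) :
    unitOhara α a = ((‖∫ s in (0:ℝ)..1, a s‖ ^ 2) ^ (-(α / 2)) -
      ((∫ s in (0:ℝ)..1, ‖a s‖) ^ 2) ^ (-(α / 2))) * ‖a 1‖ * ‖a 0‖ := by
  have key : ∀ x : ℝ, 0 ≤ x → (x ^ 2) ^ (-(α / 2)) = 1 / x ^ α := by
    intro x hx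
    rw [← Real.rpow_natCast, ← Real.rpow_mul hx, one_div, ← Real.rpow_neg hx]
    congr 1; push_cast; ring
  rw [key _ (norm_nonneg _), key _ (intervalIntegral.integral_nonneg zero_le_one
    fun _ _ => norm_nonneg _), unitOhara]

variable [CompleteSpace E]

lemma arcChordDefect_eq {a : ℝ → E} (ha : Continuous a) :
    arcChordDefect a = oscSq a - (∫ s in (0:ℝ)..1, ‖‖a s‖ - ‖a 0‖‖ ^ 2)
      + ‖∫ s in (0:ℝ)..1, (‖a s‖ - ‖a 0‖)‖ ^ 2 - ‖∫ s in (0:ℝ)..1, (a s - a 0)‖ ^ 2 := by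
  have h1 : ∫ s in (0:ℝ)..1, (‖a s‖ - ‖a 0‖) = (∫ s in (0:ℝ)..1, ‖a s‖) - ‖a 0‖ := by
    rw [intervalIntegral.integral_sub (ha.norm.intervalIntegrable _ _) (by simp)]; simp
  have h2 : ∫ s in (0:ℝ)..1, (a s - a 0) = (∫ s in (0:ℝ)..1, a s) - a 0 := by
    rw [intervalIntegral.integral_sub (ha.intervalIntegrable _ _) (by simp)]; simp
  have h3 : oscSq a - (∫ s in (0:ℝ)..1, ‖‖a s‖ - ‖a 0‖‖ ^ 2) =
      2 * ‖a 0‖ * (∫ s in (0:ℝ)..1, ‖a s‖) - 2 * ⟪a 0, ∫ s in (0:ℝ)..1, a s⟫ := by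
    rw [oscSq, ← intervalIntegral.integral_sub (Continuous.intervalIntegrable (by fun_prop) _ _)
      (Continuous.intervalIntegrable (by fun_prop) _ _), ← intervalIntegral.integral_const_mul]
    have : ⟪a 0, ∫ s in (0:ℝ)..1, a s⟫ = ∫ s in (0:ℝ)..1, ⟪a 0, a s⟫ :=
      ((innerSL ℝ (a 0)).intervalIntegral_comp_comm (ha.intervalIntegrable _ _)).symm
    rw [this, ← intervalIntegral.integral_const_mul, ← intervalIntegral.integral_sub
      (Continuous.intervalIntegrable (by fun_prop) _ _)
      (Continuous.intervalIntegrable (by fun_prop) _ _)]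
    congr 1
    funext s
    rw [norm_sub_sq_real, Real.norm_eq_abs, sq_abs, real_inner_comm]
    ring
  rw [h3, h1, h2, arcChordDefect, norm_sub_sq_real (∫ s in (0:ℝ)..1, a s), Real.norm_eq_abs,
    sq_abs, real_inner_comm]
  ring

lemma arcChordDefect_le {a : ℝ → E} (ha : Continuous a) : arcChordDefect a ≤ oscSq a := by
  rw [arcChordDefect_eq ha]
  have := norm_integral_sq_le (P := fun s => ‖a s‖ - ‖a 0‖) (by fun_prop)
  have := sq_nonneg ‖∫ s in (0:ℝ)..1, (a s - a 0)‖
  linarith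

lemma abs_arcChordDefect_sub_le {a b : ℝ → E} {c N l : ℝ} (ha : Continuous a) (hb : Continuous b)
    (hc : 0 < c) (hac : ∀ s ∈ Icc (0:ℝ) 1, c ≤ ‖a s‖) (hbc : ∀ s ∈ Icc (0:ℝ) 1, c ≤ ‖b s‖)
    (hN : ‖a 0 - b 0‖ ≤ N) (hl : 0 < l) :
    |arcChordDefect a - arcChordDefect b| ≤
      6 * l * oscSq (fun s => a s - b s) +
        (4 / l + 8 * l * (N / c) ^ 2) * (oscSq a + oscSq b) := by
  have k1 := abs_integral_norm_sq_sub_le (P := fun s => a s - a 0) (R := fun s => b s - b 0)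
    (by fun_prop) (by fun_prop) hl
  have k2 := abs_norm_integral_sq_sub_le (P := fun s => a s - a 0) (R := fun s => b s - b 0)
    (by fun_prop) (by fun_prop) hl
  have k3 := abs_integral_norm_sq_sub_le (P := fun s => ‖a s‖ - ‖a 0‖)
    (R := fun s => ‖b s‖ - ‖b 0‖) (by fun_prop) (by fun_prop) hl
  have k4 := abs_norm_integral_sq_sub_le (P := fun s => ‖a s‖ - ‖a 0‖)
    (R := fun s => ‖b s‖ - ‖b 0‖) (by fun_prop) (by fun_prop) hl
  have q1 : ∫ s in (0:ℝ)..1, ‖(a s - a 0) - (b s - b 0)‖ ^ 2 = oscSq (fun s => a s - b s) := by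
    rw [oscSq]; congr 1; funext s; congr 2; abel
  have q2 : ∫ s in (0:ℝ)..1, ‖(‖a s‖ - ‖a 0‖) - (‖b s‖ - ‖b 0‖)‖ ^ 2 ≤
      2 * oscSq (fun s => a s - b s) + 4 * (N / c) ^ 2 * (oscSq a + oscSq b) := by
    have i1 : IntervalIntegrable (fun s => ‖(a s - a 0) - (b s - b 0)‖ ^ 2) volume 0 1 :=
      Continuous.intervalIntegrable (by fun_prop) _ _
    have i2 : IntervalIntegrable (fun s => ‖a s - a 0‖ ^ 2) volume 0 1 :=
      Continuous.intervalIntegrable (by fun_prop) _ _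
    have i3 : IntervalIntegrable (fun s => ‖b s - b 0‖ ^ 2) volume 0 1 :=
      Continuous.intervalIntegrable (by fun_prop) _ _
    rw [← q1, oscSq, oscSq, ← intervalIntegral.integral_add i2 i3,
      ← intervalIntegral.integral_const_mul, ← intervalIntegral.integral_const_mul,
      ← intervalIntegral.integral_add (i1.const_mul _) ((i2.add i3).const_mul _)]
    refine intervalIntegral.integral_mono_on zero_le_one
      (Continuous.intervalIntegrable (by fun_prop) _ _)
      ((i1.const_mul _).add ((i2.add i3).const_mul _)) fun s hs => ?_
    have h := abs_norm_sub_norm_sub_le hc (hac s hs) (hbc s hs) hN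
    rw [Real.norm_eq_abs]
    refine (pow_le_pow_left₀ (abs_nonneg _) h 2).trans ?_
    generalize ‖a s - a 0 - (b s - b 0)‖ = x
    generalize ‖a s - a 0‖ = y
    generalize ‖b s - b 0‖ = z
    generalize N / c = k
    nlinarith [sq_nonneg (x - k * (y + z)), sq_nonneg (k * (y - z))]
  rw [q1] at k1 k2
  change |oscSq a - oscSq b| ≤ l * _ + (oscSq a + oscSq b) / l at k1
  change |_| ≤ l * _ + (oscSq a + oscSq b) / l at k2
  have r1 := integral_norm_sub_norm_sq_le ha
  have r2 := integral_norm_sub_norm_sq_le hb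
  rw [arcChordDefect_eq ha, arcChordDefect_eq hb]
  have r3 := div_le_div_of_nonneg_right (add_le_add r1 r2) hl.le
  have r4 := mul_le_mul_of_nonneg_left q2 hl.le
  have e1 : (4 / l + 8 * l * (N / c) ^ 2) * (oscSq a + oscSq b) =
      4 * ((oscSq a + oscSq b) / l) + 2 * (l * (4 * (N / c) ^ 2 * (oscSq a + oscSq b))) := by
    ring
  rw [e1]
  rw [abs_le] at k1 k2 k3 k4 ⊢
  constructor <;> nlinarith

lemma exists_abs_unitOhara_sub_le (E : Type*) [NormedAddCommGroup E] [InnerProductSpace ℝ E]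
    [CompleteSpace E] {α c M : ℝ} (hα : 0 < α) (hc : 0 < c) :
    ∃ C : ℝ, 0 ≤ C ∧ ∀ (a b : ℝ → E) (N l : ℝ), Continuous a → Continuous b →
      (∀ s ∈ Icc (0:ℝ) 1, c ≤ ‖a s‖) → (∀ s ∈ Icc (0:ℝ) 1, c ≤ ‖b s‖) →
      (∀ s ∈ Icc (0:ℝ) 1, ‖a s‖ ≤ M) → (∀ s ∈ Icc (0:ℝ) 1, ‖b s‖ ≤ M) →
      c ≤ ‖∫ s in (0:ℝ)..1, a s‖ → c ≤ ‖∫ s in (0:ℝ)..1, b s‖ →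
      (∀ s ∈ Icc (0:ℝ) 1, ‖a s - b s‖ ≤ N) → 0 < l →
      |unitOhara α a - unitOhara α b| ≤
        C * (l * oscSq (fun s => a s - b s) +
          (N + 1 / l + l * N ^ 2) * (oscSq a + oscSq b)) := by
  set m := c ^ 2 with hm
  have hm0 : 0 < m := by positivity
  set C1 := α / 2 * m ^ (-(α / 2) - 1) with hC1
  set C2 := α / 2 * ((α / 2 + 1) * m ^ (-(α / 2) - 2)) with hC2
  have hC1p : 0 ≤ C1 := by positivity
  have hC2p : 0 ≤ C2 := by positivity
  refine ⟨C1 * (6 + 4 + 8 / c ^ 2) * M ^ 2 + C2 * (4 * |M|) * M ^ 2 + C1 * (2 * |M|), by positivity,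
    ?_⟩
  intro a b N l ha hb hac hbc haM hbM hAc hBc hN hl
  have h0 : (0:ℝ) ∈ Icc (0:ℝ) 1 := left_mem_Icc.2 zero_le_one
  have h1 : (1:ℝ) ∈ Icc (0:ℝ) 1 := right_mem_Icc.2 zero_le_one
  have hN0 : 0 ≤ N := (norm_nonneg _).trans (hN 0 h0)
  have hM0 : 0 ≤ M := (norm_nonneg _).trans (haM 0 h0)
  rw [abs_of_nonneg hM0, unitOhara_eq, unitOhara_eq]
  have arcM : ∀ {p : ℝ → E}, Continuous p → (∀ s ∈ Icc (0:ℝ) 1, ‖p s‖ ≤ M) →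
      ∫ s in (0:ℝ)..1, ‖p s‖ ≤ M := by
    intro p hp hpM
    have := intervalIntegral.integral_mono_on (μ := volume) zero_le_one
      (hp.norm.intervalIntegrable 0 1) (intervalIntegrable_const (c := M)) hpM
    simpa using this
  have chordM : ∀ p : ℝ → E, ‖∫ s in (0:ℝ)..1, p s‖ ≤ ∫ s in (0:ℝ)..1, ‖p s‖ := fun p =>
    intervalIntegral.norm_integral_le_integral_norm zero_le_one
  have dsub : ‖(∫ s in (0:ℝ)..1, a s) - ∫ s in (0:ℝ)..1, b s‖ ≤ N := by
    rw [← intervalIntegral.integral_sub (ha.intervalIntegrable _ _) (hb.intervalIntegrable _ _)]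
    have := intervalIntegral.norm_integral_le_of_norm_le_const (a := (0:ℝ)) (b := 1) (C := N)
      (f := fun s => a s - b s) (fun s hs => hN s (by
        rw [uIoc_of_le zero_le_one] at hs; exact Ioc_subset_Icc_self hs))
    simpa using this
  have dsub' : |(∫ s in (0:ℝ)..1, ‖a s‖) - ∫ s in (0:ℝ)..1, ‖b s‖| ≤ N := by
    rw [← intervalIntegral.integral_sub (ha.norm.intervalIntegrable _ _)
      (hb.norm.intervalIntegrable _ _), ← Real.norm_eq_abs]
    have := intervalIntegral.norm_integral_le_of_norm_le_const (a := (0:ℝ)) (b := 1) (C := N)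
      (f := fun s => ‖a s‖ - ‖b s‖) (fun s hs => (abs_norm_sub_norm_le _ _).trans (hN s (by
        rw [uIoc_of_le zero_le_one] at hs; exact Ioc_subset_Icc_self hs)))
    simpa using this
  have hDa := arcChordDefect_le ha
  have hDb := arcChordDefect_le hb
  have hDa0 := arcChordDefect_nonneg a
  have hDb0 := arcChordDefect_nonneg b
  have hD := abs_arcChordDefect_sub_le ha hb hc hac hbc (hN 0 h0) hl
  have hQa := oscSq_nonneg a
  have hQb := oscSq_nonneg b
  have hQh := oscSq_nonneg (fun s => a s - b s)
  have arca := arcM ha haM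
  have arcb := arcM hb hbM
  have cha := chordM a
  have chb := chordM b
  have dch := (abs_norm_sub_norm_le _ _).trans dsub
  have e : ∀ p : ℝ → E, arcChordDefect p =
    (∫ s in (0:ℝ)..1, ‖p s‖) ^ 2 - ‖∫ s in (0:ℝ)..1, p s‖ ^ 2 := fun _ => rfl
  have ea := e a
  have eb := e b
  generalize arcChordDefect a = Da at *
  generalize arcChordDefect b = Db at *
  generalize oscSq a = Qa at *
  generalize oscSq b = Qb at *
  generalize oscSq (fun s => a s - b s) = Qh at *
  generalize ∫ s in (0:ℝ)..1, ‖a s‖ = Ba at *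
  generalize ∫ s in (0:ℝ)..1, ‖b s‖ = Bb at *
  generalize ‖∫ s in (0:ℝ)..1, a s‖ = Aa at *
  generalize ‖∫ s in (0:ℝ)..1, b s‖ = Ab at *
  have hx : m ≤ Aa ^ 2 := pow_le_pow_left₀ hc.le hAc 2
  have hx' : m ≤ Ab ^ 2 := pow_le_pow_left₀ hc.le hBc 2
  have hy : m ≤ Ba ^ 2 := pow_le_pow_left₀ hc.le (hAc.trans cha) 2
  have hy' : m ≤ Bb ^ 2 := pow_le_pow_left₀ hc.le (hBc.trans chb) 2
  have K := abs_rpow_neg_sub_sub_le hm0 (half_pos hα) hx hy hx' hy'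
  have L := abs_rpow_neg_sub_le hm0 (half_pos hα) hx' hy'
  rw [← hC1, ← hC2] at K
  rw [← hC1] at L
  have sqd : ∀ {x y : ℝ}, 0 ≤ x → 0 ≤ y → x ≤ M → y ≤ M → |x - y| ≤ N →
      |x ^ 2 - y ^ 2| ≤ 2 * M * N := by
    intro x y hx hy hxM hyM hxy
    rw [sq_sub_sq, abs_mul, abs_of_nonneg (by linarith)]
    exact mul_le_mul (by linarith) hxy (abs_nonneg _) (by linarith)
  have t1 := sqd (hc.le.trans hAc) (hc.le.trans hBc) (cha.trans arca) (chb.trans arcb) dch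
  have t2 := sqd (hc.le.trans (hAc.trans cha)) (hc.le.trans (hBc.trans chb)) arca arcb dsub'
  have u1 : |Aa ^ 2 - Ba ^ 2| = Da := by rw [ea, abs_sub_comm, abs_of_nonneg]; linarith
  have u2 : |Ab ^ 2 - Bb ^ 2| = Db := by rw [eb, abs_sub_comm, abs_of_nonneg]; linarith
  have u3 : |Aa ^ 2 - Ba ^ 2 - (Ab ^ 2 - Bb ^ 2)| = |Da - Db| := by
    rw [ea, eb, abs_sub_comm]; congr 1; ring
  rw [u1, u3] at K
  rw [u2] at L
  set X := (Aa ^ 2) ^ (-(α / 2)) - (Ba ^ 2) ^ (-(α / 2))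
  set Y := (Ab ^ 2) ^ (-(α / 2)) - (Bb ^ 2) ^ (-(α / 2))
  have w1 : |‖a 1‖ * ‖a 0‖ - ‖b 1‖ * ‖b 0‖| ≤ 2 * M * N := by
    have : ‖a 1‖ * ‖a 0‖ - ‖b 1‖ * ‖b 0‖ =
      ‖a 1‖ * (‖a 0‖ - ‖b 0‖) + (‖a 1‖ - ‖b 1‖) * ‖b 0‖ := by ring
    rw [this]
    refine (abs_add_le _ _).trans ?_
    rw [abs_mul, abs_mul, abs_norm, abs_norm]
    have g1 := mul_le_mul (haM 1 h1) ((abs_norm_sub_norm_le _ _).trans (hN 0 h0)) (abs_nonneg _) hM0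
    have g2 := mul_le_mul ((abs_norm_sub_norm_le _ _).trans (hN 1 h1)) (hbM 0 h0) (norm_nonneg _)
      hN0
    linarith
  have w2 : |‖a 1‖ * ‖a 0‖| ≤ M ^ 2 := by
    rw [abs_of_nonneg (by positivity), sq]
    exact mul_le_mul (haM 1 h1) (haM 0 h0) (norm_nonneg _) hM0
  have e2 : X * ‖a 1‖ * ‖a 0‖ - Y * ‖b 1‖ * ‖b 0‖ =
      (X - Y) * (‖a 1‖ * ‖a 0‖) + Y * (‖a 1‖ * ‖a 0‖ - ‖b 1‖ * ‖b 0‖) := by ring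
  rw [e2]
  refine (abs_add_le _ _).trans ?_
  rw [abs_mul, abs_mul Y]
  set T := l * Qh + (N + 1 / l + l * N ^ 2) * (Qa + Qb) with hT
  have hl' : 0 < 1 / l := by positivity
  have z1 : N * Qa ≤ T := by
    rw [hT]
    have : 0 ≤ l * Qh + (1 / l + l * N ^ 2) * (Qa + Qb) + N * Qb := by positivity
    linarith
  have z2 : N * Qb ≤ T := by
    rw [hT]
    have : 0 ≤ l * Qh + (1 / l + l * N ^ 2) * (Qa + Qb) + N * Qa := by positivity
    linarith
  have z3 : |Da - Db| ≤ (6 + 4 + 8 / c ^ 2) * T := by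
    refine hD.trans ?_
    have : (6 + 4 + 8 / c ^ 2) * T - (6 * l * Qh + (4 / l + 8 * l * (N / c) ^ 2) * (Qa + Qb)) =
      (4 + 8 / c ^ 2) * (l * Qh) + (10 + 8 / c ^ 2) * (N * (Qa + Qb)) +
        (6 + 8 / c ^ 2) * (1 / l * (Qa + Qb)) + 10 * (l * N ^ 2 * (Qa + Qb)) := by
      rw [hT]; field_simp; ring
    have : 0 ≤ (4 + 8 / c ^ 2) * (l * Qh) + (10 + 8 / c ^ 2) * (N * (Qa + Qb)) +
        (6 + 8 / c ^ 2) * (1 / l * (Qa + Qb)) + 10 * (l * N ^ 2 * (Qa + Qb)) := by positivity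
    linarith
  have hT0 : 0 ≤ T := by rw [hT]; positivity
  have v1 : |X - Y| ≤ C1 * ((6 + 4 + 8 / c ^ 2) * T) + C2 * (4 * M * T) := by
    refine K.trans (add_le_add (by gcongr) ?_)
    calc C2 * Da * (|Aa ^ 2 - Ab ^ 2| + |Ba ^ 2 - Bb ^ 2|)
        ≤ C2 * Qa * (2 * M * N + 2 * M * N) := by gcongr
      _ = C2 * (4 * M * (N * Qa)) := by ring
      _ ≤ _ := by gcongr
  have v2 : |Y| * |‖a 1‖ * ‖a 0‖ - ‖b 1‖ * ‖b 0‖| ≤ C1 * (2 * M * T) := by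
    calc |Y| * |‖a 1‖ * ‖a 0‖ - ‖b 1‖ * ‖b 0‖| ≤ (C1 * Qb) * (2 * M * N) := by
          gcongr
          exact L.trans (by gcongr)
      _ = C1 * (2 * M * (N * Qb)) := by ring
      _ ≤ _ := by gcongr
  have v3 := mul_le_mul v1 w2 (abs_nonneg _) (by positivity)
  refine (add_le_add v3 v2).trans_eq ?_
  ring

end ChordArc

section Gagliardo

lemma setLIntegral_Ioc_comp_add_of_periodic {H : ℝ → ℝ≥0∞} (hH : Function.Periodic H 1) (u : ℝ) :
    ∫⁻ r in Ioc (0:ℝ) 1, H (u + r) = ∫⁻ r in Ioc (0:ℝ) 1, H r := by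
  have h1 : ∫⁻ r in Ioc (0:ℝ) 1, H (u + r) = ∫⁻ v in Ioc u (u + 1), H v := by
    rw [← lintegral_indicator measurableSet_Ioc, ← lintegral_indicator measurableSet_Ioc,
      ← lintegral_add_left_eq_self (fun v => (Ioc u (u + 1)).indicator H v) u]
    congr 1
    funext r
    simp only [indicator, mem_Ioc, lt_add_iff_pos_right, add_le_add_iff_left]
  have h2 := (isAddFundamentalDomain_Ioc zero_lt_one u).setLIntegral_eq
    (isAddFundamentalDomain_Ioc zero_lt_one 0) H hH.map_vadd_zmultiples
  rw [h1, h2, zero_add]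

variable {E : Type*} [NormedAddCommGroup E]

/-- The squared Gagliardo seminorm of `p`, localized to increments of size less than `ε`. -/
def gagliardoNear (α ε : ℝ) (p : ℝ → E) : ℝ≥0∞ :=
  ∫⁻ u in Ioc (0:ℝ) 1, ∫⁻ w in Ioo (-ε) ε, ENNReal.ofReal (‖p (u + w) - p u‖ ^ 2 / |w| ^ α)

lemma gagliardoSq_eq_gagliardoNear (α : ℝ) (p : ℝ → E) :
    gagliardoSq ((α - 1) / 2) p = gagliardoNear α (1 / 2) p := by
  rw [gagliardoSq, gagliardoNear, show 1 + 2 * ((α - 1) / 2) = α by ring,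
    show -(1:ℝ) / 2 = -(1 / 2) by ring]

lemma gagliardoNear_mono {α ε ε' : ℝ} (h : ε ≤ ε') (p : ℝ → E) :
    gagliardoNear α ε p ≤ gagliardoNear α ε' p :=
  lintegral_mono fun _ => lintegral_mono_set (Ioo_subset_Ioo (neg_le_neg h) h)

variable [NormedSpace ℝ E] [CompleteSpace E]

lemma enorm_average_sub_average_le {q : ℝ → E} (hq : Continuous q) {ε b : ℝ} (hε : 0 < ε)
    (hb : ε ≤ b) :
    ‖b⁻¹ • (∫ t in (0:ℝ)..b, q t) - ε⁻¹ • ∫ t in (0:ℝ)..ε, q t‖ₑ ≤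
      ∫⁻ r in Ioc ε b, ∫⁻ t in Ioc (0:ℝ) r, ENNReal.ofReal (‖q t - q r‖ / r ^ 2) := by
  set m' : ℝ → E := fun r => r⁻¹ • q r + (-(r ^ 2)⁻¹) • ∫ t in (0:ℝ)..r, q t with hm'
  have hprim : Continuous fun r : ℝ => ∫ t in (0:ℝ)..r, q t :=
    intervalIntegral.continuous_primitive (fun _ _ => hq.intervalIntegrable _ _) 0
  have hcont : ContinuousOn m' (uIcc ε b) := by
    rw [uIcc_of_le hb]
    have hne : ∀ r ∈ Icc ε b, r ≠ 0 := fun r hr => (hε.trans_le hr.1).ne'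
    refine ContinuousOn.add ((continuousOn_id.inv₀ hne).smul hq.continuousOn)
      (ContinuousOn.smul ?_ hprim.continuousOn)
    exact (ContinuousOn.inv₀ (by fun_prop) fun r hr => pow_ne_zero 2 (hne r hr)).neg
  have hderiv : ∀ r ∈ uIcc ε b, HasDerivAt (fun r => r⁻¹ • ∫ t in (0:ℝ)..r, q t) (m' r) r := by
    intro r hr
    rw [uIcc_of_le hb] at hr
    exact (hasDerivAt_inv (hε.trans_le hr.1).ne').smul
      (intervalIntegral.integral_hasDerivAt_right (hq.intervalIntegrable _ _)
        hq.aestronglyMeasurable.stronglyMeasurableAtFilter hq.continuousAt)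
  rw [← intervalIntegral.integral_eq_sub_of_hasDerivAt hderiv hcont.intervalIntegrable,
    intervalIntegral.integral_of_le hb]
  refine (enorm_integral_le_lintegral_enorm _).trans ?_
  refine setLIntegral_mono' measurableSet_Ioc fun r hr => ?_
  have hr0 : 0 < r := hε.trans hr.1
  have e : m' r = ∫ t in Ioc (0:ℝ) r, (-(r ^ 2)⁻¹) • (q t - q r) := by
    rw [integral_smul, ← intervalIntegral.integral_of_le hr0.le, intervalIntegral.integral_sub
      (hq.intervalIntegrable _ _) (by simp), intervalIntegral.integral_const, hm', smul_sub,
      smul_smul]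
    simp only [sub_zero]
    rw [sub_eq_add_neg, ← neg_smul, add_comm]
    congr 2
    field_simp
  rw [e]
  refine (enorm_integral_le_lintegral_enorm _).trans (lintegral_mono fun t => ?_)
  rw [← ofReal_norm, norm_smul, norm_neg, norm_inv, Real.norm_of_nonneg (by positivity),
    inv_mul_eq_div]

lemma norm_average_sub_average_le {α : ℝ} (hα : 2 < α) {p : ℝ → E} (hp : Continuous p)
    (hper : Function.Periodic p 1) (u : ℝ) {N : ℝ} (hN : 0 < N)
    (hG : gagliardoNear α (1 / 2) p ≤ ENNReal.ofReal (N ^ 2)) {ε : ℝ} (hε : 0 < ε)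
    (hε' : ε ≤ 1 / 2) :
    ‖(1 / 2 : ℝ)⁻¹ • (∫ t in (0:ℝ)..(1 / 2), p (u + t)) - ε⁻¹ • ∫ t in (0:ℝ)..ε, p (u + t)‖ ≤
      (1 + 1 / (α - 2)) * N := by
  set H : ℝ → ℝ≥0∞ := fun v => ∫⁻ w in Ioo (-(1 / 2 : ℝ)) (1 / 2),
    ENNReal.ofReal (‖p (v + w) - p v‖ ^ 2 / |w| ^ α) with hH
  have hHper : Function.Periodic H 1 := by
    intro v
    simp only [hH]
    congr 1; funext w
    rw [show v + 1 + w = v + w + 1 by ring, hper, hper]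
  have point : ∀ r ∈ Ioc ε (1 / 2 : ℝ), ∀ t ∈ Ioc (0:ℝ) r,
      ENNReal.ofReal (‖p (u + t) - p (u + r)‖ / r ^ 2) ≤
        ENNReal.ofReal (1 / N) * ENNReal.ofReal (‖p (u + t) - p (u + r)‖ ^ 2 / |t - r| ^ α) +
          ENNReal.ofReal (N * r ^ (α - 4)) := by
    intro r hr t ht
    have hr0 : 0 < r := hε.trans hr.1
    rw [← ENNReal.ofReal_mul (by positivity), ← ENNReal.ofReal_add (by positivity) (by positivity)]
    refine ENNReal.ofReal_le_ofReal ?_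
    rcases ht.2.eq_or_lt with rfl | htr
    · simp; positivity
    set X := ‖p (u + t) - p (u + r)‖
    have hd : 0 < |t - r| := abs_pos.2 (sub_ne_zero.2 htr.ne)
    have hdr : |t - r| ^ α ≤ r ^ α := by
      refine Real.rpow_le_rpow hd.le ?_ (by linarith)
      rw [abs_sub_comm, abs_of_pos (sub_pos.2 htr)]
      linarith [ht.1]
    have e : N * r ^ (α - 4) = N * r ^ α / (r ^ 2) ^ 2 := by
      rw [Real.rpow_sub hr0, ← pow_mul, mul_div_assoc]; norm_cast
    rw [e]
    have hda : 0 < |t - r| ^ α := Real.rpow_pos_of_pos hd _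
    set D := |t - r| ^ α
    have : X / r ^ 2 ≤ 1 / N * (X ^ 2 / D) + N * D / (r ^ 2) ^ 2 := by
      have : 1 / N * (X ^ 2 / D) + N * D / (r ^ 2) ^ 2 - X / r ^ 2 =
          ((X * r ^ 2 - N * D / 2) ^ 2 + 3 / 4 * (N * D) ^ 2) / (N * D * (r ^ 2) ^ 2) := by
        field_simp; ring
      have h2 : 0 ≤ ((X * r ^ 2 - N * D / 2) ^ 2 + 3 / 4 * (N * D) ^ 2) / (N * D * (r ^ 2) ^ 2) := by
        positivity
      linarith
    refine this.trans ?_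
    gcongr
  have inner1 : ∀ r ∈ Ioc ε (1 / 2 : ℝ),
      ∫⁻ t in Ioc (0:ℝ) r, ENNReal.ofReal (‖p (u + t) - p (u + r)‖ ^ 2 / |t - r| ^ α) ≤
        H (u + r) := by
    intro r hr
    simp only [hH]
    rw [← lintegral_indicator measurableSet_Ioc, ← lintegral_indicator measurableSet_Ioo,
      ← lintegral_add_left_eq_self _ r]
    refine lintegral_mono fun w => ?_
    by_cases hw : r + w ∈ Ioc (0:ℝ) r
    · have hw' : w ∈ Ioo (-(1 / 2 : ℝ)) (1 / 2) := by
        constructor <;> linarith [hw.1, hw.2, hr.2]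
      rw [indicator_of_mem hw, indicator_of_mem hw', add_sub_cancel_left, add_assoc]
    · rw [indicator_of_notMem hw]; exact zero_le
  have inner2 : ∀ r ∈ Ioc ε (1 / 2 : ℝ), ∫⁻ t in Ioc (0:ℝ) r, ENNReal.ofReal (N * r ^ (α - 4)) =
      ENNReal.ofReal (N * r ^ (α - 3)) := by
    intro r hr
    have hr0 : 0 < r := hε.trans hr.1
    rw [lintegral_const, Measure.restrict_apply_univ, Real.volume_Ioc, sub_zero,
      ← ENNReal.ofReal_mul (by positivity), mul_assoc, ← Real.rpow_add_one hr0.ne']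
    congr 3; ring
  have hHm : Measurable fun r => H (u + r) := by
    have : Measurable H := by
      refine Measurable.lintegral_prod_right'
        (f := fun z : ℝ × ℝ => ENNReal.ofReal (‖p (z.1 + z.2) - p z.1‖ ^ 2 / |z.2| ^ α)) ?_
      have : Measurable fun z : ℝ × ℝ => ‖p (z.1 + z.2) - p z.1‖ :=
        Continuous.measurable (by fun_prop)
      fun_prop
    exact this.comp (measurable_const_add u)
  have bound : ∫⁻ r in Ioc ε (1 / 2 : ℝ), ∫⁻ t in Ioc (0:ℝ) r,
      ENNReal.ofReal (‖p (u + t) - p (u + r)‖ / r ^ 2) ≤ ENNReal.ofReal ((1 + 1 / (α - 2)) * N) := by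
    calc _ ≤ ∫⁻ r in Ioc ε (1 / 2 : ℝ), (ENNReal.ofReal (1 / N) * H (u + r) +
          ENNReal.ofReal (N * r ^ (α - 3))) := by
          refine setLIntegral_mono' measurableSet_Ioc fun r hr => ?_
          refine (setLIntegral_mono' measurableSet_Ioc (point r hr)).trans ?_
          rw [lintegral_add_right _ measurable_const, inner2 r hr, lintegral_const_mul']
          · gcongr; exact inner1 r hr
          · exact ENNReal.ofReal_ne_top
      _ ≤ ENNReal.ofReal (1 / N) * ENNReal.ofReal (N ^ 2) +
          ENNReal.ofReal (N * (1 / (α - 2))) := by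
          rw [lintegral_add_right _ (by fun_prop), lintegral_const_mul _ hHm]
          refine add_le_add ?_ ?_
          · gcongr
            refine (lintegral_mono_set (Ioc_subset_Ioc hε.le (by norm_num : (1/2:ℝ) ≤ 1))).trans ?_
            rw [setLIntegral_Ioc_comp_add_of_periodic hHper]
            exact hG
          · refine (lintegral_mono_set (Ioc_subset_Ioc hε.le (by norm_num : (1/2:ℝ) ≤ 1))).trans ?_
            have hint : IntervalIntegrable (fun r : ℝ => r ^ (α - 3)) volume 0 1 :=
              intervalIntegral.intervalIntegrable_rpow' (by linarith)
            have hint' : IntegrableOn (fun r : ℝ => N * r ^ (α - 3)) (Ioc 0 1) :=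
              ((intervalIntegrable_iff_integrableOn_Ioc_of_le zero_le_one).1 hint).const_mul N
            rw [← ofReal_integral_eq_lintegral_ofReal hint', ← intervalIntegral.integral_of_le
              zero_le_one, intervalIntegral.integral_const_mul, integral_rpow (Or.inl (by linarith))]
            · refine ENNReal.ofReal_le_ofReal (le_of_eq ?_)
              rw [Real.one_rpow, Real.zero_rpow (by linarith), show α - 3 + 1 = α - 2 by ring,
                sub_zero]
            · refine (ae_restrict_mem measurableSet_Ioc).mono fun r hr => ?_
              exact mul_nonneg hN.le (Real.rpow_nonneg hr.1.le _)
      _ = _ := by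
          have : 0 < α - 2 := by linarith
          rw [← ENNReal.ofReal_mul (by positivity), ← ENNReal.ofReal_add (by positivity)
            (by positivity)]
          congr 1
          field_simp
  have h0 := enorm_average_sub_average_le (q := fun t => p (u + t)) (by fun_prop) hε hε'
  have h1 := h0.trans bound
  rw [← ofReal_norm] at h1
  refine (ENNReal.ofReal_le_ofReal_iff ?_).1 h1
  have : 0 < α - 2 := by linarith
  positivity

lemma norm_le_of_gagliardoNear_le {α : ℝ} (hα : 2 < α) {p : ℝ → E} (hp : Continuous p)
    (hper : Function.Periodic p 1) (u : ℝ) {N : ℝ} (hN : 0 < N)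
    (hG : gagliardoNear α (1 / 2) p ≤ ENNReal.ofReal (N ^ 2))
    (hL : ∫ t in (0:ℝ)..1, ‖p t‖ ^ 2 ≤ N ^ 2) :
    ‖p u‖ ≤ (3 + 1 / (α - 2)) * N := by
  have hmean : ‖(1 / 2 : ℝ)⁻¹ • ∫ t in (0:ℝ)..(1 / 2), p (u + t)‖ ≤ 2 * N := by
    rw [norm_smul]
    have : ‖∫ t in (0:ℝ)..(1 / 2), p (u + t)‖ ≤ N := by
      calc ‖∫ t in (0:ℝ)..(1 / 2), p (u + t)‖ ≤ ∫ t in (0:ℝ)..(1 / 2), ‖p (u + t)‖ :=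
            intervalIntegral.norm_integral_le_integral_norm (by norm_num)
        _ ≤ ∫ t in (0:ℝ)..1, ‖p (u + t)‖ := by
            refine intervalIntegral.integral_mono_interval le_rfl (by norm_num) (by norm_num)
              (Eventually.of_forall fun _ => norm_nonneg _)
              (Continuous.intervalIntegrable (by fun_prop) _ _)
        _ = ∫ t in (0:ℝ)..1, ‖p t‖ := by
            have hper' : Function.Periodic (fun t => ‖p t‖) 1 := fun t => by simp only [hper t]
            have := hper'.intervalIntegral_add_eq u 0
            rw [zero_add] at this
            rw [← this, intervalIntegral.integral_comp_add_left (fun t => ‖p t‖), add_zero]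
        _ ≤ N := by
            have := sq_integral_norm_le hp.norm
            exact abs_le_of_sq_le_sq' (this.trans hL) hN.le |>.2
    rw [Real.norm_of_nonneg (by norm_num)]
    linarith
  refine le_of_forall_pos_le_add fun η hη => ?_
  obtain ⟨d, hd, hdη⟩ := Metric.continuousAt_iff.1 (hp.continuousAt (x := u)) η hη
  set ε := min (d / 2) (1 / 2) with hεdef
  have hε : 0 < ε := by positivity
  have hclose : ‖ε⁻¹ • (∫ t in (0:ℝ)..ε, p (u + t)) - p u‖ ≤ η := by
    have e : ε⁻¹ • (∫ t in (0:ℝ)..ε, p (u + t)) - p u =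
        ε⁻¹ • ∫ t in (0:ℝ)..ε, (p (u + t) - p u) := by
      rw [intervalIntegral.integral_sub (Continuous.intervalIntegrable (by fun_prop) _ _)
        (by simp), intervalIntegral.integral_const, smul_sub, smul_smul, sub_zero,
        inv_mul_cancel₀ hε.ne', one_smul]
    rw [e, norm_smul, norm_inv, Real.norm_of_nonneg hε.le, inv_mul_le_iff₀ hε]
    have := intervalIntegral.norm_integral_le_of_norm_le_const (a := (0:ℝ)) (b := ε) (C := η)
      (f := fun t => p (u + t) - p u) (fun t ht => by
        rw [uIoc_of_le hε.le] at ht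
        rw [← dist_eq_norm]
        refine (hdη ?_).le
        rw [Real.dist_eq, add_sub_cancel_left, abs_of_pos ht.1]
        have := min_le_left (d / 2) (1 / 2)
        linarith [ht.2])
    rwa [sub_zero, abs_of_pos hε, mul_comm] at this
  have h1 := norm_average_sub_average_le hα hp hper u hN hG hε (min_le_right _ _)
  set x := (1 / 2 : ℝ)⁻¹ • ∫ t in (0:ℝ)..(1 / 2), p (u + t)
  set y := ε⁻¹ • ∫ t in (0:ℝ)..ε, p (u + t)
  have e : p u = x - (x - y) - (y - p u) := by abel
  rw [e]
  have := norm_sub_le (x - (x - y)) (y - p u)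
  have := norm_sub_le x (x - y)
  linarith

end Gagliardo

section Scaling

variable {E : Type*} [NormedAddCommGroup E]

lemma lintegral_comp_mul_left_real {F : ℝ → ℝ≥0∞} (hF : Measurable F) {s : ℝ} (hs : 0 < s) :
    ∫⁻ w, F (s * w) = ENNReal.ofReal s⁻¹ * ∫⁻ v, F v := by
  rw [← lintegral_map hF (measurable_const_mul s), Real.map_volume_mul_left hs.ne',
    lintegral_smul_measure, abs_of_pos (inv_pos.2 hs), smul_eq_mul]

lemma lintegral_dilation_le {α ε s : ℝ} (hα : 1 ≤ α) (hs : s ∈ Ioc (0:ℝ) 1) {p : ℝ → E}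
    (hp : Continuous p) (u : ℝ) :
    ∫⁻ w in Ioo (-ε) ε, ENNReal.ofReal (‖p (u + s * w) - p u‖ ^ 2 / |w| ^ α) ≤
      ∫⁻ w in Ioo (-ε) ε, ENNReal.ofReal (‖p (u + w) - p u‖ ^ 2 / |w| ^ α) := by
  set F : ℝ → ℝ≥0∞ := (Ioo (-ε) ε).indicator
    fun w => ENNReal.ofReal (‖p (u + w) - p u‖ ^ 2 / |w| ^ α) with hF
  have hFm : Measurable F := by
    refine Measurable.indicator ?_ measurableSet_Ioo
    have : Measurable fun z : ℝ => ‖p (u + z) - p u‖ := Continuous.measurable (by fun_prop)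
    fun_prop
  have hsa : 0 < s ^ α := Real.rpow_pos_of_pos hs.1 _
  rw [← lintegral_indicator measurableSet_Ioo, ← lintegral_indicator measurableSet_Ioo]
  calc _ ≤ ∫⁻ w, ENNReal.ofReal (s ^ α) * F (s * w) := by
        refine lintegral_mono fun w => ?_
        by_cases hw : w ∈ Ioo (-ε) ε
        · have hw' : s * w ∈ Ioo (-ε) ε := by
            have hw2 : |w| < ε := abs_lt.2 hw
            refine abs_lt.1 ?_
            rw [abs_mul, abs_of_pos hs.1]
            exact (mul_le_of_le_one_left (abs_nonneg _) hs.2).trans_lt hw2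
          simp only [hF]
          rw [indicator_of_mem hw, indicator_of_mem hw', ← ENNReal.ofReal_mul hsa.le, abs_mul,
            abs_of_pos hs.1, Real.mul_rpow hs.1.le (abs_nonneg _)]
          refine ENNReal.ofReal_le_ofReal (le_of_eq ?_)
          rw [mul_div_assoc', mul_div_mul_left _ _ hsa.ne']
        · rw [indicator_of_notMem hw]; exact zero_le
    _ = ENNReal.ofReal (s ^ α * s⁻¹) * ∫⁻ v, F v := by
        rw [lintegral_const_mul' _ _ ENNReal.ofReal_ne_top,
          lintegral_comp_mul_left_real hFm hs.1, ← mul_assoc, ← ENNReal.ofReal_mul hsa.le]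
    _ ≤ 1 * ∫⁻ v, F v := by
        gcongr
        rw [ENNReal.ofReal_le_one, ← div_eq_mul_inv, div_le_one hs.1]
        simpa using Real.rpow_le_rpow_of_exponent_ge hs.1 hs.2 hα
    _ = _ := one_mul _

lemma lintegral_oscSq_le {α ε : ℝ} (hα : 1 ≤ α) {p : ℝ → E} (hp : Continuous p) :
    ∫⁻ u in Ioc (0:ℝ) 1, ∫⁻ w in Ioo (-ε) ε,
      ENNReal.ofReal (oscSq (fun s => p (u + s * w)) / |w| ^ α) ≤ gagliardoNear α ε p := by
  have h0 : ∀ u w : ℝ, ENNReal.ofReal (oscSq (fun s => p (u + s * w)) / |w| ^ α) =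
      ∫⁻ s in Ioc (0:ℝ) 1, ENNReal.ofReal (‖p (u + s * w) - p u‖ ^ 2 / |w| ^ α) := by
    intro u w
    rw [oscSq, ← intervalIntegral.integral_div, intervalIntegral.integral_of_le zero_le_one,
      ofReal_integral_eq_lintegral_ofReal]
    · simp only [zero_mul, add_zero]
    · exact (Continuous.integrableOn_Icc (by fun_prop)).mono_set Ioc_subset_Icc_self
    · exact Eventually.of_forall fun s => by positivity
  have hm1 : ∀ u : ℝ, Measurable (Function.uncurry fun w s : ℝ =>
      ENNReal.ofReal (‖p (u + s * w) - p u‖ ^ 2 / |w| ^ α)) := by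
    intro u
    have : Measurable fun z : ℝ × ℝ => ‖p (u + z.2 * z.1) - p u‖ :=
      Continuous.measurable (by fun_prop)
    simp only [Function.uncurry_def]
    fun_prop
  have hm2 : Measurable fun z : (ℝ × ℝ) × ℝ =>
      ENNReal.ofReal (‖p (z.1.1 + z.1.2 * z.2) - p z.1.1‖ ^ 2 / |z.2| ^ α) := by
    have : Measurable fun z : (ℝ × ℝ) × ℝ => ‖p (z.1.1 + z.1.2 * z.2) - p z.1.1‖ :=
      Continuous.measurable (by fun_prop)
    fun_prop
  simp_rw [h0]
  calc _ = ∫⁻ u in Ioc (0:ℝ) 1, ∫⁻ s in Ioc (0:ℝ) 1, ∫⁻ w in Ioo (-ε) ε,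
        ENNReal.ofReal (‖p (u + s * w) - p u‖ ^ 2 / |w| ^ α) := by
        refine lintegral_congr fun u => ?_
        exact lintegral_lintegral_swap (hm1 u).aemeasurable
    _ = ∫⁻ s in Ioc (0:ℝ) 1, ∫⁻ u in Ioc (0:ℝ) 1, ∫⁻ w in Ioo (-ε) ε,
        ENNReal.ofReal (‖p (u + s * w) - p u‖ ^ 2 / |w| ^ α) := by
        exact lintegral_lintegral_swap (hm2.lintegral_prod_right').aemeasurable
    _ ≤ ∫⁻ s in Ioc (0:ℝ) 1, gagliardoNear α ε p :=
        setLIntegral_mono' measurableSet_Ioc fun s hs =>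
          lintegral_mono fun u => lintegral_dilation_le hα hs hp u
    _ = _ := by simp

end Scaling

section H1

lemma deriv_periodic {n : ℕ} {f : ℝ → Rn n} (hf : Function.Periodic f 1) :
    Function.Periodic (deriv f) 1 := fun u => by
  rw [← deriv_comp_add_const]
  congr 1
  funext x
  exact hf x

lemma MemH1.contDiff {n : ℕ} {σ : ℝ} {f : ℝ → Rn n} (hf : MemH1 σ f) : ContDiff ℝ 1 f := hf.2.1

lemma MemH1.differentiable {n : ℕ} {σ : ℝ} {f : ℝ → Rn n} (hf : MemH1 σ f) :
    Differentiable ℝ f := hf.2.1.differentiable one_ne_zero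

lemma MemH1.continuous_deriv {n : ℕ} {σ : ℝ} {f : ℝ → Rn n} (hf : MemH1 σ f) :
    Continuous (deriv f) := hf.2.1.continuous_deriv le_rfl

lemma MemH1.periodic_deriv {n : ℕ} {σ : ℝ} {f : ℝ → Rn n} (hf : MemH1 σ f) :
    Function.Periodic (deriv f) 1 := deriv_periodic hf.1

lemma MemH1.deriv_sub {n : ℕ} {σ : ℝ} {f g : ℝ → Rn n} (hf : MemH1 σ f) (hg : MemH1 σ g) :
    deriv (f - g) = deriv f - deriv g := by
  funext u
  rw [_root_.deriv_sub hf.differentiable.differentiableAt hg.differentiable.differentiableAt]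
  rfl

lemma MemH1.sub {n : ℕ} {σ : ℝ} {f g : ℝ → Rn n} (hf : MemH1 σ f) (hg : MemH1 σ g) :
    MemH1 σ (f - g) := by
  refine ⟨hf.1.sub hg.1, hf.2.1.sub hg.2.1, ?_⟩
  rw [hf.deriv_sub hg]
  have hm : ∀ q : ℝ → Rn n, Continuous q → Measurable fun z : ℝ × ℝ =>
      ENNReal.ofReal (‖q (z.1 + z.2) - q z.1‖ ^ 2 / |z.2| ^ (1 + 2 * σ)) := by
    intro q hq
    have : Measurable fun z : ℝ × ℝ => ‖q (z.1 + z.2) - q z.1‖ :=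
      Continuous.measurable (by fun_prop)
    fun_prop
  have hle : gagliardoSq σ (deriv f - deriv g) ≤
      2 * gagliardoSq σ (deriv f) + 2 * gagliardoSq σ (deriv g) := by
    have m1 := hm _ hf.continuous_deriv
    have m2 := hm _ hg.continuous_deriv
    simp only [gagliardoSq]
    rw [← lintegral_const_mul _ (m1.lintegral_prod_right'), ← lintegral_const_mul _
      (m2.lintegral_prod_right'), ← lintegral_add_left (m1.lintegral_prod_right'.const_mul _)]
    refine lintegral_mono fun u => ?_
    have n1 := m1.comp (measurable_const.prodMk measurable_id : Measurable fun w : ℝ => (u, w))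
    have n2 := m2.comp (measurable_const.prodMk measurable_id : Measurable fun w : ℝ => (u, w))
    simp only [Function.comp_def] at n1 n2
    rw [← lintegral_const_mul _ n1, ← lintegral_const_mul _ n2,
      ← lintegral_add_left (n1.const_mul _)]
    refine lintegral_mono fun w => ?_
    have h2 : ∀ x : ℝ, (2 : ℝ≥0∞) * ENNReal.ofReal x = ENNReal.ofReal (2 * x) := fun x => by
      rw [ENNReal.ofReal_mul zero_le_two, ENNReal.ofReal_ofNat]
    rw [h2, h2, ← ENNReal.ofReal_add (by positivity) (by positivity)]
    refine ENNReal.ofReal_le_ofReal ?_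
    rw [mul_div_assoc', mul_div_assoc', ← add_div]
    refine div_le_div_of_nonneg_right ?_ (by positivity)
    simp only [Pi.sub_apply]
    rw [show deriv f (u + w) - deriv g (u + w) - (deriv f u - deriv g u) =
      (deriv f (u + w) - deriv f u) - (deriv g (u + w) - deriv g u) by abel]
    have := norm_sub_le (deriv f (u + w) - deriv f u) (deriv g (u + w) - deriv g u)
    nlinarith [norm_nonneg ((deriv f (u + w) - deriv f u) - (deriv g (u + w) - deriv g u)),
      sq_nonneg (‖deriv f (u + w) - deriv f u‖ - ‖deriv g (u + w) - deriv g u‖)]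
  exact hle.trans_lt (ENNReal.add_lt_top.2
    ⟨ENNReal.mul_lt_top (by simp) hf.2.2, ENNReal.mul_lt_top (by simp) hg.2.2⟩)

lemma MemH1.gagliardoNear_le {n : ℕ} {α N : ℝ} {f : ℝ → Rn n} (hf : MemH1 ((α - 1) / 2) f)
    (hN : H1Norm ((α - 1) / 2) f ≤ N) :
    gagliardoNear α (1 / 2) (deriv f) ≤ ENNReal.ofReal (N ^ 2) := by
  rw [← gagliardoSq_eq_gagliardoNear, ← ENNReal.ofReal_toReal hf.2.2.ne]
  refine ENNReal.ofReal_le_ofReal ?_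
  have h1 : Real.sqrt (gagliardoSq ((α - 1) / 2) (deriv f)).toReal ≤ N :=
    le_trans (le_add_of_nonneg_left (Real.sqrt_nonneg _)) hN
  exact (Real.sqrt_le_iff.1 h1).2

lemma MemH1.norm_deriv_le {n : ℕ} {α N : ℝ} (hα : 2 < α) {f : ℝ → Rn n}
    (hf : MemH1 ((α - 1) / 2) f) (hN0 : 0 < N) (hN : H1Norm ((α - 1) / 2) f ≤ N) (u : ℝ) :
    ‖deriv f u‖ ≤ (3 + 1 / (α - 2)) * N := by
  refine norm_le_of_gagliardoNear_le hα hf.continuous_deriv hf.periodic_deriv u hN0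
    (hf.gagliardoNear_le hN) ?_
  have h1 : Real.sqrt (∫ u in Ioc (0:ℝ) 1, (‖f u‖ ^ 2 + ‖deriv f u‖ ^ 2)) ≤ N :=
    le_trans (le_add_of_nonneg_right (Real.sqrt_nonneg _)) hN
  refine le_trans ?_ (Real.sqrt_le_iff.1 h1).2
  have hc := hf.continuous_deriv
  have hc' := hf.contDiff.continuous
  rw [← intervalIntegral.integral_of_le zero_le_one]
  refine intervalIntegral.integral_mono_on zero_le_one
    (Continuous.intervalIntegrable (by fun_prop) _ _)
    (Continuous.intervalIntegrable (by fun_prop) _ _) fun s _ => ?_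
  exact le_add_of_nonneg_left (sq_nonneg _)

end H1

section Geometry

variable {n : ℕ}

lemma Function.Periodic.exists_pos_forall_le {p : ℝ → ℝ} (hper : Function.Periodic p 1)
    (hp : Continuous p) (hpos : ∀ u, 0 < p u) : ∃ c > 0, ∃ M, ∀ u, c ≤ p u ∧ p u ≤ M := by
  obtain ⟨x, -, hx⟩ := isCompact_Icc.exists_isMinOn (nonempty_Icc.2 zero_le_one) hp.continuousOn
  obtain ⟨y, -, hy⟩ := isCompact_Icc.exists_isMaxOn (nonempty_Icc.2 zero_le_one) hp.continuousOn
  refine ⟨p x, hpos x, p y, fun u => ?_⟩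
  obtain ⟨v, hv, hv'⟩ := hper.exists_mem_Ico₀ zero_lt_one u
  rw [hv']
  exact ⟨hx (Ico_subset_Icc_self hv), hy (Ico_subset_Icc_self hv)⟩

lemma Function.Periodic.exists_norm_sub_le {E : Type*} [NormedAddCommGroup E] {p : ℝ → E}
    (hper : Function.Periodic p 1) (hp : Continuous p) {e : ℝ} (he : 0 < e) :
    ∃ d > 0, ∀ u v : ℝ, |v| < d → ‖p (u + v) - p u‖ ≤ e := by
  obtain ⟨d, hd, h⟩ := Metric.uniformContinuousOn_iff.1
    ((isCompact_Icc (a := (-1:ℝ)) (b := 2)).uniformContinuousOn_of_continuous hp.continuousOn) e he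
  refine ⟨min d 1, by positivity, fun u v hv => ?_⟩
  obtain ⟨x, hx, hx'⟩ := (show Function.Periodic (fun u => ‖p (u + v) - p u‖) 1 from
    fun u => by simp only [add_right_comm u 1 v, hper _]).exists_mem_Ico₀ zero_lt_one u
  rw [hx', ← dist_eq_norm]
  have hv1 := abs_lt.1 (hv.trans_le (min_le_right _ _))
  refine (h _ ⟨?_, ?_⟩ _ ⟨?_, ?_⟩ ?_).le
  · linarith [hx.1]
  · linarith [hx.2]
  · linarith [hx.1]
  · linarith [hx.2]
  · rw [Real.dist_eq, add_sub_cancel_left]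
    exact hv.trans_le (min_le_left _ _)

lemma ContDiff.sub_eq_smul_integral_deriv {f : ℝ → Rn n} (hf : ContDiff ℝ 1 f) (u w : ℝ) :
    f (u + w) - f u = w • ∫ s in (0:ℝ)..1, deriv f (u + s * w) := by
  have h := intervalIntegral.smul_integral_comp_add_mul (a := 0) (b := 1) (deriv f) w u
  simp only [mul_comm _ w]
  rw [h, mul_zero, mul_one, add_zero, intervalIntegral.integral_deriv_eq_sub
    (fun x _ => (hf.differentiable one_ne_zero).differentiableAt)
    ((hf.continuous_deriv le_rfl).intervalIntegrable _ _)]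

lemma arcLen_eq_mul_integral (f : ℝ → Rn n) (u w : ℝ) :
    arcLen f u w = |w| * ∫ s in (0:ℝ)..1, ‖deriv f (u + s * w)‖ := by
  have h := intervalIntegral.smul_integral_comp_add_mul (a := 0) (b := 1)
    (fun v => ‖deriv f v‖) w u
  simp only [mul_comm _ w]
  have h0 : 0 ≤ ∫ s in (0:ℝ)..1, ‖deriv f (u + w * s)‖ :=
    intervalIntegral.integral_nonneg zero_le_one fun _ _ => norm_nonneg _
  rw [mul_zero, mul_one, add_zero, smul_eq_mul] at h
  rw [arcLen, ← h, abs_mul, abs_of_nonneg h0]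

lemma ohIntegrand_eq_unitOhara_div {α : ℝ} {f : ℝ → Rn n} (hf : ContDiff ℝ 1 f) {u w : ℝ}
    (h : idist f u w = arcLen f u w) :
    ohIntegrand α f u w = unitOhara α (fun s => deriv f (u + s * w)) / |w| ^ α := by
  rw [ohIntegrand, h, arcLen_eq_mul_integral, hf.sub_eq_smul_integral_deriv, norm_smul,
    Real.norm_eq_abs, Real.mul_rpow (abs_nonneg _) (norm_nonneg _),
    Real.mul_rpow (abs_nonneg _)
      (intervalIntegral.integral_nonneg zero_le_one fun _ _ => norm_nonneg _), unitOhara]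
  simp only [one_mul, zero_mul, add_zero, one_div, mul_inv]
  ring

lemma le_curveLen {f : ℝ → Rn n} {c : ℝ} (hf : Continuous (deriv f))
    (hc : ∀ u, c ≤ ‖deriv f u‖) : c ≤ curveLen f := by
  have := intervalIntegral.integral_mono_on (a := 0) (b := 1) (f := fun _ => c)
    (g := fun v => ‖deriv f v‖) (μ := volume) zero_le_one (by simp)
    (hf.norm.intervalIntegrable _ _) fun u _ => hc u
  simpa [curveLen] using this

lemma arcLen_le {f : ℝ → Rn n} {M : ℝ} (hM : ∀ u, ‖deriv f u‖ ≤ M) (u w : ℝ) :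
    arcLen f u w ≤ M * |w| := by
  have := intervalIntegral.norm_integral_le_of_norm_le_const (a := u) (b := u + w) (C := M)
    (f := fun v => ‖deriv f v‖) fun v _ => by simpa using hM v
  simpa [arcLen] using this

lemma idist_eq_arcLen {f : ℝ → Rn n} {c M : ℝ} (hf : Continuous (deriv f))
    (hc : ∀ u, c ≤ ‖deriv f u‖) (hM : ∀ u, ‖deriv f u‖ ≤ M) {w : ℝ} (hw : 2 * M * |w| ≤ c)
    (u : ℝ) : idist f u w = arcLen f u w := by
  refine min_eq_left ?_
  have h1 := le_curveLen hf hc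
  have h2 := arcLen_le hM u w
  linarith

lemma idist_pos {f : ℝ → Rn n} {c : ℝ} (hf : Continuous (deriv f)) (hper : Function.Periodic f 1)
    (hc0 : 0 < c) (hc : ∀ u, c ≤ ‖deriv f u‖) {w : ℝ} (hw0 : w ≠ 0) (hw : |w| < 1) (u : ℝ) :
    0 < idist f u w := by
  have hper' : Function.Periodic (fun v => ‖deriv f v‖) 1 := (deriv_periodic hper).comp _
  have hint : ∀ a b, IntervalIntegrable (fun v => ‖deriv f v‖) volume a b := fun a b =>
    hf.norm.intervalIntegrable _ _
  have hpos : ∀ a b : ℝ, a < b → 0 < ∫ v in a..b, ‖deriv f v‖ := fun a b hab =>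
    intervalIntegral.intervalIntegral_pos_of_pos (hint a b) (fun v => hc0.trans_le (hc v)) hab
  have hlen : ∀ a : ℝ, curveLen f = ∫ v in a..(a + 1), ‖deriv f v‖ := fun a => by
    have := hper'.intervalIntegral_add_eq a 0
    rw [zero_add] at this
    rw [this, curveLen]
  obtain ⟨h1, h2⟩ := abs_lt.1 hw
  rcases lt_or_gt_of_ne hw0 with h | h
  · have e : arcLen f u w = ∫ v in (u + w)..u, ‖deriv f v‖ := by
      rw [arcLen, intervalIntegral.integral_symm, abs_neg, abs_of_pos (hpos _ _ (by linarith))]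
    refine lt_min (e ▸ hpos _ _ (by linarith)) ?_
    rw [e, hlen (u + w), intervalIntegral.integral_interval_sub_left (hint _ _) (hint _ _)]
    exact hpos _ _ (by linarith)
  · have e : arcLen f u w = ∫ v in u..(u + w), ‖deriv f v‖ := by
      rw [arcLen, abs_of_pos (hpos _ _ (by linarith))]
    refine lt_min (e ▸ hpos _ _ (by linarith)) ?_
    rw [e, hlen u, intervalIntegral.integral_interval_sub_left (hint _ _) (hint _ _)]
    exact hpos _ _ (by linarith)

lemma exists_pos_le_chord {f₀ : ℝ → Rn n} (h₀ : Continuous f₀)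
    (hper₀ : Function.Periodic f₀ 1) (hinj : PerInjective f₀) {d : ℝ} (hd0 : 0 < d) :
    ∃ m > 0, ∀ u w : ℝ, d ≤ |w| → |w| ≤ 1 / 2 → m ≤ ‖f₀ (u + w) - f₀ u‖ := by
  by_cases hne : d ≤ 1 / 2
  swap
  · exact ⟨1, one_pos, fun u w h1 h2 => absurd (h1.trans h2) hne⟩
  have hS : IsCompact (Icc (0:ℝ) 1 ×ˢ (Icc (-(1/2) : ℝ) (1/2) ∩ {w | d ≤ |w|})) :=
    isCompact_Icc.prod (isCompact_Icc.inter_right (isClosed_le continuous_const continuous_abs))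
  have hcont : Continuous fun z : ℝ × ℝ => ‖f₀ (z.1 + z.2) - f₀ z.1‖ := by
    fun_prop
  have hne' : ((0:ℝ), (1/2:ℝ)) ∈ Icc (0:ℝ) 1 ×ˢ (Icc (-(1/2) : ℝ) (1/2) ∩ {w | d ≤ |w|}) := by
    refine ⟨by simp, ⟨by norm_num, by norm_num⟩, ?_⟩
    show d ≤ |(1/2:ℝ)|
    rwa [abs_of_pos one_half_pos]
  obtain ⟨z, hz, hzmin⟩ := hS.exists_isMinOn ⟨_, hne'⟩ hcont.continuousOn
  refine ⟨‖f₀ (z.1 + z.2) - f₀ z.1‖, norm_pos_iff.2 fun h => ?_, fun u w h1 h2 => ?_⟩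
  · obtain ⟨k, hk⟩ := hinj _ _ (sub_eq_zero.1 h)
    have hz2 : d ≤ |z.2| := hz.2.2
    have hk' : z.2 = ((-k : ℤ) : ℝ) := by push_cast; linarith
    have hlt : |z.2| < 1 := (abs_le.2 hz.2.1).trans_lt one_half_lt_one
    rw [hk', ← Int.cast_abs] at hlt hz2
    have : |-k| < 1 := by exact_mod_cast hlt
    rw [Int.abs_lt_one_iff] at this
    rw [this] at hz2
    simp at hz2
    linarith
  · obtain ⟨v, hv, hv'⟩ := (show Function.Periodic (fun u => ‖f₀ (u + w) - f₀ u‖) 1 from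
      fun u => by simp only [add_right_comm u 1 w, hper₀ _]).exists_mem_Ico₀ zero_lt_one u
    have hmem : (v, w) ∈ Icc (0:ℝ) 1 ×ˢ (Icc (-(1/2) : ℝ) (1/2) ∩ {w | d ≤ |w|}) :=
      ⟨Ico_subset_Icc_self hv, abs_le.1 h2, h1⟩
    exact (isMinOn_iff.1 hzmin _ hmem).trans_eq hv'.symm

lemma exists_uniform_geometry {f₀ : ℝ → Rn n} (h₀ : ContDiff ℝ 1 f₀)
    (hper₀ : Function.Periodic f₀ 1) (hinj : PerInjective f₀) (hreg : RegularCurve f₀) :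
    ∃ ρ > 0, ∃ c > 0, ∃ M, ∃ d > 0, ∀ f : ℝ → Rn n, ContDiff ℝ 1 f → Function.Periodic f 1 →
      (∀ u, ‖deriv f u - deriv f₀ u‖ ≤ ρ) →
      PerInjective f ∧ (∀ u, c ≤ ‖deriv f u‖) ∧ (∀ u, ‖deriv f u‖ ≤ M) ∧
      ∀ u w : ℝ, |w| ≤ d → c ≤ ‖∫ s in (0:ℝ)..1, deriv f (u + s * w)‖ ∧
        idist f u w = arcLen f u w := by
  have hd₀ : Continuous (deriv f₀) := h₀.continuous_deriv le_rfl
  have hdper := deriv_periodic hper₀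
  obtain ⟨c₀, hc₀, M₀, hcM⟩ := (hdper.comp (fun x => ‖x‖)).exists_pos_forall_le
    hd₀.norm fun u => norm_pos_iff.2 (hreg u)
  simp only [Function.comp_apply] at hcM
  have hM₀ : 0 < M₀ := hc₀.trans_le ((hcM 0).1.trans (hcM 0).2)
  obtain ⟨d₁, hd₁, hunif⟩ := hdper.exists_norm_sub_le hd₀ (show 0 < c₀ / 4 by positivity)
  set M := M₀ + c₀ with hM
  have hMpos : 0 < M := by positivity
  obtain ⟨d, hd0, hdd₁, hdc⟩ : ∃ d > 0, d < d₁ ∧ d ≤ c₀ / 4 / (2 * M) :=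
    ⟨min (d₁ / 2) (c₀ / 4 / (2 * M)), by positivity,
      (min_le_left _ _).trans_lt (half_lt_self hd₁), min_le_right _ _⟩
  obtain ⟨m, hm, hchord⟩ := exists_pos_le_chord h₀.continuous hper₀ hinj hd0
  have hρ : 0 < min (c₀ / 8) m := by positivity
  refine ⟨min (c₀ / 8) m, hρ, c₀ / 4, by positivity, M, d, hd0, fun f hf hper hclose => ?_⟩
  have hdf : Continuous (deriv f) := hf.continuous_deriv le_rfl
  have hclose' : ∀ u, ‖deriv f u - deriv f₀ u‖ ≤ c₀ / 8 := fun u =>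
    (hclose u).trans (min_le_left _ _)
  have hlow : ∀ u, 7 * c₀ / 8 ≤ ‖deriv f u‖ := fun u => by
    have h1 := norm_sub_norm_le (deriv f₀ u) (deriv f u)
    rw [norm_sub_rev] at h1
    linarith [(hcM u).1, hclose' u]
  have hupp : ∀ u, ‖deriv f u‖ ≤ M := fun u => by
    have h1 := norm_sub_norm_le (deriv f u) (deriv f₀ u)
    linarith [(hcM u).2, hclose' u]
  have hmean : ∀ u w : ℝ, |w| ≤ d → c₀ / 4 ≤ ‖∫ s in (0:ℝ)..1, deriv f (u + s * w)‖ := by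
    intro u w hw
    have h1 : ‖∫ s in (0:ℝ)..1, (deriv f (u + s * w) - deriv f u)‖ ≤ c₀ / 2 * |1 - 0| := by
      refine intervalIntegral.norm_integral_le_of_norm_le_const fun s hs => ?_
      rw [uIoc_of_le zero_le_one] at hs
      have h2 : ‖deriv f₀ (u + s * w) - deriv f₀ u‖ ≤ c₀ / 4 := by
        refine hunif u _ ?_
        rw [abs_mul, abs_of_pos hs.1]
        exact ((mul_le_of_le_one_left (abs_nonneg _) hs.2).trans hw).trans_lt hdd₁
      have h3 := hclose' (u + s * w)
      have h4 := hclose' u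
      calc ‖deriv f (u + s * w) - deriv f u‖ = ‖(deriv f (u + s * w) - deriv f₀ (u + s * w)) +
            (deriv f₀ (u + s * w) - deriv f₀ u) - (deriv f u - deriv f₀ u)‖ := by
            congr 1; abel
        _ ≤ c₀ / 8 + c₀ / 4 + c₀ / 8 := by
            refine (norm_sub_le _ _).trans (add_le_add ((norm_add_le _ _).trans ?_) h4)
            exact add_le_add h3 h2
        _ = c₀ / 2 := by ring
    rw [intervalIntegral.integral_sub (Continuous.intervalIntegrable (by fun_prop) _ _) (by simp),
      intervalIntegral.integral_const, sub_zero, one_smul, abs_one, mul_one] at h1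
    have h5 := norm_sub_norm_le (deriv f u) (∫ s in (0:ℝ)..1, deriv f (u + s * w))
    rw [norm_sub_rev] at h5
    linarith [hlow u]
  refine ⟨fun u v huv => ?_, fun u => by linarith [hlow u], hupp, fun u w hw => ⟨hmean u w hw, ?_⟩⟩
  swap
  · refine idist_eq_arcLen hdf (c := c₀ / 4) (fun u => by linarith [hlow u]) hupp ?_ u
    calc 2 * M * |w| ≤ 2 * M * (c₀ / 4 / (2 * M)) := by gcongr; exact hw.trans hdc
      _ = c₀ / 4 := by field_simp
  refine ⟨round (v - u), ?_⟩
  set w := v - u - round (v - u) with hw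
  have hw2 : |w| ≤ 1 / 2 := abs_sub_round _
  have huw : f (u + w) = f u := by
    rw [huv, show u + w = v - (round (v - u) : ℝ) * 1 by rw [hw]; ring,
      hper.sub_int_mul_eq]
  suffices w = 0 by rw [this] at hw; linarith
  by_contra hw0
  by_cases hwd : |w| ≤ d
  · have h1 := hf.sub_eq_smul_integral_deriv u w
    rw [huw, sub_self, eq_comm, smul_eq_zero, or_iff_right hw0] at h1
    have h2 := hmean u w hwd
    rw [h1, norm_zero] at h2
    linarith
  · have h1 := hchord u w (not_le.1 hwd).le hw2
    have h2 := (hf.sub h₀).sub_eq_smul_integral_deriv u w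
    have h3 : ‖∫ s in (0:ℝ)..1, deriv (fun x => f x - f₀ x) (u + s * w)‖ ≤ m * |1 - 0| := by
      refine intervalIntegral.norm_integral_le_of_norm_le_const fun s _ => ?_
      rw [deriv_fun_sub (hf.differentiable one_ne_zero).differentiableAt
        (h₀.differentiable one_ne_zero).differentiableAt]
      exact (hclose _).trans (min_le_right _ _)
    simp only [huw, sub_zero, abs_one, mul_one] at h2 h3
    have h4 : ‖f₀ (u + w) - f₀ u‖ =
        |w| * ‖∫ s in (0:ℝ)..1, deriv (fun x => f x - f₀ x) (u + s * w)‖ := by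
      rw [← Real.norm_eq_abs, ← norm_smul, ← h2, ← norm_neg]
      congr 1; abel
    have h5 : |w| * ‖∫ s in (0:ℝ)..1, deriv (fun x => f x - f₀ x) (u + s * w)‖ ≤ 1 / 2 * m :=
      mul_le_mul hw2 h3 (norm_nonneg _) (by norm_num)
    linarith

end Geometry

section Energy

variable {n : ℕ}

lemma continuous_arcLen {f : ℝ → Rn n} (hf : Continuous (deriv f)) :
    Continuous fun z : ℝ × ℝ => arcLen f z.1 z.2 := by
  have hint : ∀ a b, IntervalIntegrable (fun v => ‖deriv f v‖) volume a b := fun a b =>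
    hf.norm.intervalIntegrable _ _
  have hprim : Continuous fun r : ℝ => ∫ v in (0:ℝ)..r, ‖deriv f v‖ :=
    intervalIntegral.continuous_primitive hint 0
  have : ∀ u w, arcLen f u w =
      |(∫ v in (0:ℝ)..(u + w), ‖deriv f v‖) - ∫ v in (0:ℝ)..u, ‖deriv f v‖| := fun u w => by
    rw [arcLen, intervalIntegral.integral_interval_sub_left (hint _ _) (hint _ _)]
  simp only [this]
  exact ((hprim.comp (continuous_fst.add continuous_snd)).sub (hprim.comp continuous_fst)).abs

lemma abs_le_half_of_mem_Wset {ε w : ℝ} (hw : w ∈ Wset ε) (hε : 0 < ε) : ε ≤ |w| ∧ |w| ≤ 1 / 2 := by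
  rcases hw with hw | hw
  · have h : w ≤ 0 := hw.2.trans (neg_nonpos.2 hε.le)
    rw [abs_of_nonpos h]
    constructor <;> linarith [hw.1, hw.2]
  · rw [abs_of_nonneg (hε.le.trans hw.1)]
    exact hw

lemma measurableSet_Wset (ε : ℝ) : MeasurableSet (Wset ε) :=
  measurableSet_Icc.union measurableSet_Icc

lemma isCompact_Wset (ε : ℝ) : IsCompact (Wset ε) := isCompact_Icc.union isCompact_Icc

lemma Wset_subset_Wset {ε₁ ε₂ : ℝ} (h : ε₁ ≤ ε₂) : Wset ε₂ ⊆ Wset ε₁ :=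
  union_subset_union (Icc_subset_Icc le_rfl (neg_le_neg h)) (Icc_subset_Icc h le_rfl)

lemma abs_lt_of_mem_Wset_sdiff {ε₁ ε₂ w : ℝ} (hw : w ∈ Wset ε₁ \ Wset ε₂) (hε₁ : 0 < ε₁) :
    0 < |w| ∧ |w| < ε₂ := by
  obtain ⟨h1, h2⟩ := abs_le_half_of_mem_Wset hw.1 hε₁
  refine ⟨hε₁.trans_le h1, lt_of_not_ge fun h => hw.2 ?_⟩
  rcases le_abs.1 h with h | h
  · exact Or.inr ⟨h, (le_abs_self w).trans h2⟩
  · exact Or.inl ⟨by linarith [(abs_le.1 h2).1], by linarith⟩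

lemma continuousOn_ohIntegrand {α ε c : ℝ} (hα : 0 ≤ α) (hε : 0 < ε) {f : ℝ → Rn n}
    (hf : ContDiff ℝ 1 f) (hper : Function.Periodic f 1) (hinj : PerInjective f) (hc0 : 0 < c)
    (hc : ∀ u, c ≤ ‖deriv f u‖) :
    ContinuousOn (fun z : ℝ × ℝ => ohIntegrand α f z.1 z.2) (univ ×ˢ Wset ε) := by
  have hdf : Continuous (deriv f) := hf.continuous_deriv le_rfl
  have hf0 := hf.continuous
  have hid : Continuous fun z : ℝ × ℝ => idist f z.1 z.2 :=
    (continuous_arcLen hdf).min (continuous_const.sub (continuous_arcLen hdf))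
  have hchord : Continuous fun z : ℝ × ℝ => ‖f (z.1 + z.2) - f z.1‖ := by fun_prop
  have hw : ∀ z : ℝ × ℝ, z ∈ univ ×ˢ Wset ε → z.2 ≠ 0 ∧ |z.2| < 1 := fun z hz => by
    obtain ⟨h1, h2⟩ := abs_le_half_of_mem_Wset hz.2 hε
    exact ⟨abs_pos.1 (hε.trans_le h1), h2.trans_lt one_half_lt_one⟩
  refine ContinuousOn.mul (ContinuousOn.mul (ContinuousOn.sub ?_ ?_) ?_) ?_
  · refine continuousOn_const.div (hchord.rpow_const fun _ => Or.inr hα).continuousOn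
      fun z hz => (Real.rpow_pos_of_pos (norm_pos_iff.2 fun h => ?_) _).ne'
    obtain ⟨k, hk⟩ := hinj _ _ (sub_eq_zero.1 h)
    obtain ⟨h1, h2⟩ := hw z hz
    have hk' : z.2 = ((-k : ℤ) : ℝ) := by push_cast; linarith
    rw [hk', ← Int.cast_abs] at h2
    have h3 : |-k| < 1 := by exact_mod_cast h2
    rw [Int.abs_lt_one_iff] at h3
    rw [h3] at hk'
    exact h1 (by simpa using hk')
  · exact continuousOn_const.div (hid.rpow_const fun _ => Or.inr hα).continuousOn fun z hz =>
      (Real.rpow_pos_of_pos (idist_pos hdf hper hc0 hc (hw z hz).1 (hw z hz).2 _) _).ne'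
  · exact Continuous.continuousOn (by fun_prop)
  · exact Continuous.continuousOn (by fun_prop)

lemma integrableOn_ohIntegrand {α ε c : ℝ} (hα : 0 ≤ α) (hε : 0 < ε) {f : ℝ → Rn n}
    (hf : ContDiff ℝ 1 f) (hper : Function.Periodic f 1) (hinj : PerInjective f) (hc0 : 0 < c)
    (hc : ∀ u, c ≤ ‖deriv f u‖) :
    IntegrableOn (fun z : ℝ × ℝ => ohIntegrand α f z.1 z.2) (Ioc (0:ℝ) 1 ×ˢ Wset ε) :=
  (((continuousOn_ohIntegrand hα hε hf hper hinj hc0 hc).mono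
    (prod_mono (subset_univ (Icc (0:ℝ) 1)) le_rfl)).integrableOn_compact
    (isCompact_Icc.prod (isCompact_Wset ε))).mono_set (prod_mono Ioc_subset_Icc_self le_rfl)

lemma oharaEeps_sub_eq {α ε₁ ε₂ c : ℝ} (hα : 0 ≤ α) (hε₁ : 0 < ε₁) (hε : ε₁ ≤ ε₂)
    {f : ℝ → Rn n} (hf : ContDiff ℝ 1 f) (hper : Function.Periodic f 1) (hinj : PerInjective f)
    (hc0 : 0 < c) (hc : ∀ u, c ≤ ‖deriv f u‖) :
    oharaEeps α ε₁ f - oharaEeps α ε₂ f =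
      ∫ z in Ioc (0:ℝ) 1 ×ˢ (Wset ε₁ \ Wset ε₂), ohIntegrand α f z.1 z.2 := by
  have h1 := integrableOn_ohIntegrand hα hε₁ hf hper hinj hc0 hc
  have h2 := integrableOn_ohIntegrand hα (hε₁.trans_le hε) hf hper hinj hc0 hc
  have hset : Ioc (0:ℝ) 1 ×ˢ (Wset ε₁ \ Wset ε₂) =
      Ioc (0:ℝ) 1 ×ˢ Wset ε₁ \ Ioc (0:ℝ) 1 ×ˢ Wset ε₂ := by grind
  rw [hset, setIntegral_sdiff (measurableSet_Ioc.prod (measurableSet_Wset _)) h1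
    (prod_mono le_rfl (Wset_subset_Wset hε)), oharaEeps, oharaEeps]
  exact congrArg₂ _ (setIntegral_prod _ h1).symm (setIntegral_prod _ h2).symm

lemma continuous_oscSq {p : ℝ → Rn n} (hp : Continuous p) :
    Continuous fun z : ℝ × ℝ => oscSq (fun s => p (z.1 + s * z.2)) := by
  unfold oscSq
  exact intervalIntegral.continuous_parametric_intervalIntegral_of_continuous' (by fun_prop) 0 1

lemma lintegral_combination_oscSq_le {α ε A B x y : ℝ} (hα : 1 ≤ α) (hA : 0 ≤ A) (hB : 0 ≤ B)
    (hx : 0 ≤ x) (hy : 0 ≤ y)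
    {p q r : ℝ → Rn n} (hp : Continuous p) (hq : Continuous q) (hr : Continuous r)
    (hgp : gagliardoNear α ε p ≤ ENNReal.ofReal x) (hgq : gagliardoNear α ε q ≤ ENNReal.ofReal y)
    (hgr : gagliardoNear α ε r ≤ ENNReal.ofReal y) :
    ∫⁻ u in Ioc (0:ℝ) 1, ∫⁻ w in Ioo (-ε) ε, ENNReal.ofReal
      ((A * oscSq (fun s => p (u + s * w)) +
        B * (oscSq (fun s => q (u + s * w)) + oscSq (fun s => r (u + s * w)))) / |w| ^ α) ≤
      ENNReal.ofReal (A * x + 2 * B * y) := by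
  have hm : ∀ p : ℝ → Rn n, Continuous p → Measurable fun z : ℝ × ℝ =>
      ENNReal.ofReal (oscSq (fun s => p (z.1 + s * z.2)) / |z.2| ^ α) := fun p hp => by
    have := (continuous_oscSq hp).measurable
    fun_prop
  have hm' : ∀ p : ℝ → Rn n, Continuous p → ∀ u : ℝ, Measurable fun w : ℝ =>
      ENNReal.ofReal (oscSq (fun s => p (u + s * w)) / |w| ^ α) := fun p hp u => by
    have : Measurable fun w : ℝ => oscSq (fun s => p (u + s * w)) :=
      ((continuous_oscSq hp).comp (continuous_const.prodMk continuous_id :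
        Continuous fun w : ℝ => (u, w))).measurable
    fun_prop
  have hsplit : ∀ u w : ℝ, ENNReal.ofReal
      ((A * oscSq (fun s => p (u + s * w)) +
        B * (oscSq (fun s => q (u + s * w)) + oscSq (fun s => r (u + s * w)))) / |w| ^ α) =
      ENNReal.ofReal A * ENNReal.ofReal (oscSq (fun s => p (u + s * w)) / |w| ^ α) +
      (ENNReal.ofReal B * ENNReal.ofReal (oscSq (fun s => q (u + s * w)) / |w| ^ α) +
      ENNReal.ofReal B * ENNReal.ofReal (oscSq (fun s => r (u + s * w)) / |w| ^ α)) := by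
    intro u w
    have h1 := oscSq_nonneg (fun s => p (u + s * w))
    have h2 := oscSq_nonneg (fun s => q (u + s * w))
    have h3 := oscSq_nonneg (fun s => r (u + s * w))
    rw [← ENNReal.ofReal_mul hA, ← ENNReal.ofReal_mul hB, ← ENNReal.ofReal_mul hB,
      ← ENNReal.ofReal_add (by positivity) (by positivity),
      ← ENNReal.ofReal_add (by positivity) (by positivity)]
    congr 1
    ring
  simp_rw [hsplit]
  calc _ = ENNReal.ofReal A * (∫⁻ u in Ioc (0:ℝ) 1, ∫⁻ w in Ioo (-ε) ε,
          ENNReal.ofReal (oscSq (fun s => p (u + s * w)) / |w| ^ α)) +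
        (ENNReal.ofReal B * (∫⁻ u in Ioc (0:ℝ) 1, ∫⁻ w in Ioo (-ε) ε,
          ENNReal.ofReal (oscSq (fun s => q (u + s * w)) / |w| ^ α)) +
        ENNReal.ofReal B * (∫⁻ u in Ioc (0:ℝ) 1, ∫⁻ w in Ioo (-ε) ε,
          ENNReal.ofReal (oscSq (fun s => r (u + s * w)) / |w| ^ α))) := by
        rw [← lintegral_const_mul' _ _ ENNReal.ofReal_ne_top,
          ← lintegral_const_mul' _ _ ENNReal.ofReal_ne_top,
          ← lintegral_const_mul' _ _ ENNReal.ofReal_ne_top,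
          ← lintegral_add_left ((hm q hq).lintegral_prod_right'.const_mul _),
          ← lintegral_add_left ((hm p hp).lintegral_prod_right'.const_mul _)]
        refine lintegral_congr fun u => ?_
        rw [← lintegral_const_mul' _ _ ENNReal.ofReal_ne_top,
          ← lintegral_const_mul' _ _ ENNReal.ofReal_ne_top,
          ← lintegral_const_mul' _ _ ENNReal.ofReal_ne_top,
          ← lintegral_add_left ((hm' q hq u).const_mul _),
          ← lintegral_add_left ((hm' p hp u).const_mul _)]
    _ ≤ ENNReal.ofReal A * ENNReal.ofReal x + (ENNReal.ofReal B * ENNReal.ofReal y +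
        ENNReal.ofReal B * ENNReal.ofReal y) := by
        gcongr
        · exact (lintegral_oscSq_le hα hp).trans hgp
        · exact (lintegral_oscSq_le hα hq).trans hgq
        · exact (lintegral_oscSq_le hα hr).trans hgr
    _ = _ := by
        rw [← ENNReal.ofReal_mul hA, ← ENNReal.ofReal_mul hB,
          ← ENNReal.ofReal_add (by positivity) (by positivity),
          ← ENNReal.ofReal_add (by positivity) (by positivity)]
        congr 1
        ring

end Energy

section Lipschitz

variable {n : ℕ}

lemma abs_oharaEeps_sub_sub_le {α ε₁ ε₂ c A B x y : ℝ} (hα : 1 ≤ α) (hε₁ : 0 < ε₁)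
    (hε : ε₁ ≤ ε₂) {f g : ℝ → Rn n} (hf : ContDiff ℝ 1 f) (hfper : Function.Periodic f 1)
    (hfinj : PerInjective f) (hg : ContDiff ℝ 1 g) (hgper : Function.Periodic g 1)
    (hginj : PerInjective g) (hc0 : 0 < c) (hfc : ∀ u, c ≤ ‖deriv f u‖)
    (hgc : ∀ u, c ≤ ‖deriv g u‖) (hA : 0 ≤ A) (hB : 0 ≤ B) (hx : 0 ≤ x) (hy : 0 ≤ y)
    (hfg : gagliardoNear α ε₂ (deriv f - deriv g) ≤ ENNReal.ofReal x)
    (hf' : gagliardoNear α ε₂ (deriv f) ≤ ENNReal.ofReal y)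
    (hg' : gagliardoNear α ε₂ (deriv g) ≤ ENNReal.ofReal y)
    (hbound : ∀ u w : ℝ, 0 < |w| → |w| < ε₂ →
      |ohIntegrand α f u w - ohIntegrand α g u w| ≤
        (A * oscSq (fun s => (deriv f - deriv g) (u + s * w)) +
          B * (oscSq (fun s => deriv f (u + s * w)) + oscSq (fun s => deriv g (u + s * w)))) /
            |w| ^ α) :
    |(oharaEeps α ε₁ f - oharaEeps α ε₂ f) - (oharaEeps α ε₁ g - oharaEeps α ε₂ g)| ≤
      A * x + 2 * B * y := by
  have hα0 : 0 ≤ α := zero_le_one.trans hα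
  have hdf : Continuous (deriv f) := hf.continuous_deriv le_rfl
  have hdg : Continuous (deriv g) := hg.continuous_deriv le_rfl
  have hsub : Ioc (0:ℝ) 1 ×ˢ (Wset ε₁ \ Wset ε₂) ⊆ Ioc (0:ℝ) 1 ×ˢ Wset ε₁ :=
    prod_mono le_rfl sdiff_subset
  have hmeas : MeasurableSet (Wset ε₁ \ Wset ε₂) :=
    (measurableSet_Wset _).diff (measurableSet_Wset _)
  have hint₁ := (integrableOn_ohIntegrand hα0 hε₁ hf hfper hfinj hc0 hfc).mono_set hsub
  have hint₂ := (integrableOn_ohIntegrand hα0 hε₁ hg hgper hginj hc0 hgc).mono_set hsub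
  rw [oharaEeps_sub_eq hα0 hε₁ hε hf hfper hfinj hc0 hfc,
    oharaEeps_sub_eq hα0 hε₁ hε hg hgper hginj hc0 hgc, ← integral_sub hint₁ hint₂,
    ← ENNReal.ofReal_le_ofReal_iff (by positivity), ← Real.enorm_eq_ofReal_abs]
  refine (enorm_integral_le_lintegral_enorm _).trans ?_
  have hae : AEMeasurable (fun z : ℝ × ℝ => ‖ohIntegrand α f z.1 z.2 - ohIntegrand α g z.1 z.2‖ₑ)
      ((volume.restrict (Ioc (0:ℝ) 1)).prod (volume.restrict (Wset ε₁ \ Wset ε₂))) := by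
    rw [Measure.prod_restrict]
    exact (hint₁.sub hint₂).aestronglyMeasurable.enorm
  rw [Measure.volume_eq_prod, ← Measure.prod_restrict, lintegral_prod _ hae]
  refine le_trans (lintegral_mono fun u => ?_)
    (lintegral_combination_oscSq_le hα hA hB hx hy (hdf.sub hdg) hdf hdg hfg hf' hg')
  refine le_trans (setLIntegral_mono' hmeas fun w hw => ?_)
    (lintegral_mono_set fun w hw => abs_lt.1 (abs_lt_of_mem_Wset_sdiff hw hε₁).2)
  obtain ⟨h1, h2⟩ := abs_lt_of_mem_Wset_sdiff hw hε₁
  rw [Real.enorm_eq_ofReal_abs]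
  exact ENNReal.ofReal_le_ofReal (hbound u w h1 h2)

lemma exists_lipschitz_bound {α c M d K : ℝ} (hα : 1 ≤ α) (hc0 : 0 < c) (hK : 0 ≤ K) :
    ∃ C, 0 ≤ C ∧ ∀ f g : ℝ → Rn n,
      (∀ q ∈ ({f, g} : Set (ℝ → Rn n)), ContDiff ℝ 1 q ∧ Function.Periodic q 1 ∧
        PerInjective q ∧ (∀ u, c ≤ ‖deriv q u‖) ∧ (∀ u, ‖deriv q u‖ ≤ M) ∧
        ∀ u w : ℝ, |w| ≤ d → c ≤ ‖∫ s in (0:ℝ)..1, deriv q (u + s * w)‖ ∧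
          idist q u w = arcLen q u w) →
      ∀ N θ ε₁ ε₂ : ℝ, 0 < N → 0 < θ → θ ≤ 2 → 0 < ε₁ → ε₁ ≤ ε₂ → ε₂ ≤ d →
      (∀ u, ‖deriv f u - deriv g u‖ ≤ K * N) →
      gagliardoNear α ε₂ (deriv f - deriv g) ≤ ENNReal.ofReal (N ^ 2) →
      gagliardoNear α ε₂ (deriv f) ≤ ENNReal.ofReal (θ ^ 2) →
      gagliardoNear α ε₂ (deriv g) ≤ ENNReal.ofReal (θ ^ 2) →
      |(oharaEeps α ε₁ f - oharaEeps α ε₂ f) - (oharaEeps α ε₁ g - oharaEeps α ε₂ g)| ≤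
        C * θ * N := by
  obtain ⟨C, hC, hmain⟩ := exists_abs_unitOhara_sub_le (Rn n) (α := α) (c := c) (M := M)
    (zero_lt_one.trans_le hα) hc0
  refine ⟨C * (3 + 4 * K + 8 * K ^ 2), by positivity, ?_⟩
  intro f g hfg N θ ε₁ ε₂ hN hθ hθ2 hε₁ hε hεd hsup hGh hGf hGg
  obtain ⟨hf, hfper, hfinj, hfc, hfM, hfd⟩ := hfg f (by simp)
  obtain ⟨hg, hgper, hginj, hgc, hgM, hgd⟩ := hfg g (by simp)
  have hdf : Continuous (deriv f) := hf.continuous_deriv le_rfl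
  have hdg : Continuous (deriv g) := hg.continuous_deriv le_rfl
  have hl : 0 < θ / N := by positivity
  refine (abs_oharaEeps_sub_sub_le (A := C * (θ / N))
    (B := C * (K * N + 1 / (θ / N) + θ / N * (K * N) ^ 2)) hα hε₁ hε hf hfper hfinj hg hgper hginj
    hc0 hfc hgc (by positivity) (by positivity) (sq_nonneg _) (sq_nonneg _) hGh hGf hGg
    fun u w hw0 hw => ?_).trans ?_
  · obtain ⟨hf1, hf2⟩ := hfd u w (hw.le.trans hεd)
    obtain ⟨hg1, hg2⟩ := hgd u w (hw.le.trans hεd)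
    rw [ohIntegrand_eq_unitOhara_div hf hf2, ohIntegrand_eq_unitOhara_div hg hg2, ← sub_div,
      abs_div, abs_of_pos (Real.rpow_pos_of_pos hw0 α)]
    refine div_le_div_of_nonneg_right ?_ (Real.rpow_pos_of_pos hw0 α).le
    refine (hmain _ _ (K * N) (θ / N) (by fun_prop) (by fun_prop) (fun s _ => hfc _)
      (fun s _ => hgc _) (fun s _ => hfM _) (fun s _ => hgM _) hf1 hg1 (fun s _ => hsup _)
      hl).trans (le_of_eq ?_)
    simp only [Pi.sub_apply]
    ring
  · have e : C * (θ / N) * N ^ 2 + 2 * (C * (K * N + 1 / (θ / N) + θ / N * (K * N) ^ 2)) * θ ^ 2 =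
        C * (3 + 2 * K * θ + 2 * K ^ 2 * θ ^ 2) * θ * N := by
      field_simp
      ring
    have h1 : K * θ ≤ K * 2 := mul_le_mul_of_nonneg_left hθ2 hK
    have h2 : K ^ 2 * θ ^ 2 ≤ K ^ 2 * 2 ^ 2 :=
      mul_le_mul_of_nonneg_left (pow_le_pow_left₀ hθ.le hθ2 2) (sq_nonneg K)
    have h3 : 3 + 2 * K * θ + 2 * K ^ 2 * θ ^ 2 ≤ 3 + 4 * K + 8 * K ^ 2 := by linarith
    rw [e]
    exact mul_le_mul_of_nonneg_right (mul_le_mul_of_nonneg_right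
      (mul_le_mul_of_nonneg_left h3 hC) hθ.le) hN.le

lemma H1Norm_nonneg (σ : ℝ) (f : ℝ → Rn n) : 0 ≤ H1Norm σ f :=
  add_nonneg (Real.sqrt_nonneg _) (Real.sqrt_nonneg _)

lemma MemH1.gagliardoNear_le_of_sqrt_le {α ε θ : ℝ} {f : ℝ → Rn n} (hf : MemH1 ((α - 1) / 2) f)
    (hε : ε ≤ 1 / 2) (h : Real.sqrt (gagliardoNear α ε (deriv f)).toReal ≤ θ) :
    gagliardoNear α ε (deriv f) ≤ ENNReal.ofReal (θ ^ 2) := by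
  have hlt : gagliardoNear α ε (deriv f) < ⊤ :=
    (gagliardoNear_mono hε _).trans_lt (gagliardoSq_eq_gagliardoNear α (deriv f) ▸ hf.2.2)
  rw [← ENNReal.ofReal_toReal hlt.ne]
  exact ENNReal.ofReal_le_ofReal (Real.sqrt_le_iff.1 h).2

end Lipschitz

/-- (Lemma on near-Cauchy behaviour of the truncated energies.) Around an
injective regular `γ₀ ∈ H^{(1+α)/2,2}` there are a ball `U` of radius `r` consisting of
injective regular curves and a constant `C` such that for every `δ ∈ [0,1]` and every set
`X_δ` with the uniform-integrability property, `limsup_{ε₁,ε₂→0} Lip_{U∩X_δ}(E^α_{ε₁} − E^α_{ε₂}) ≤ Cδ`. -/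
theorem statement8 {n : ℕ} (hn : 2 ≤ n) {α : ℝ} (hα : α ∈ Ioo (2:ℝ) 3)
    {γ₀ : ℝ → Rn n} (hγ₀ : MemH1 ((α - 1) / 2) γ₀) (hinj : PerInjective γ₀)
    (hreg : RegularCurve γ₀) :
    ∃ r > (0:ℝ), ∃ C : ℝ,
      -- the ball of radius `r` consists of injective regular curves
      (∀ γ : ℝ → Rn n, MemH1 ((α - 1) / 2) γ → H1Norm ((α - 1) / 2) (γ - γ₀) < r →
        PerInjective γ ∧ RegularCurve γ) ∧
      ∀ δ ∈ Icc (0:ℝ) 1, ∀ X : Set (ℝ → Rn n),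
        (∀ γ ∈ X, MemH1 ((α - 1) / 2) γ) →
        -- `limsup_{ε→0} sup_{γ ∈ X} (∬_{(ℝ/ℤ)×[−ε,ε]} |γ'(u+w)−γ'(u)|²/|w|^α)^{1/2} ≤ δ`
        (∀ η > (0:ℝ), ∃ ε' > (0:ℝ), ∀ ε ∈ Ioo (0:ℝ) ε', ∀ γ ∈ X,
          Real.sqrt ((∫⁻ u in Ioc (0:ℝ) 1, ∫⁻ w in Ioo (-ε) ε,
            ENNReal.ofReal (‖deriv γ (u + w) - deriv γ u‖ ^ 2 / |w| ^ α)).toReal)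
              ≤ δ + η) →
        -- `limsup_{ε₁,ε₂→0} Lip_{U ∩ X}(E^α_{ε₁} − E^α_{ε₂}) ≤ C δ`
        ∀ η > (0:ℝ), ∃ ε' > (0:ℝ), ∀ ε₁ ∈ Ioo (0:ℝ) ε', ∀ ε₂ ∈ Ioo (0:ℝ) ε',
          ∀ f ∈ X, ∀ g ∈ X,
            H1Norm ((α - 1) / 2) (f - γ₀) < r → H1Norm ((α - 1) / 2) (g - γ₀) < r →
            |(oharaEeps α ε₁ f - oharaEeps α ε₂ f) - (oharaEeps α ε₁ g - oharaEeps α ε₂ g)|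
              ≤ (C * δ + η) * H1Norm ((α - 1) / 2) (f - g) := by
  have hα2 : 2 < α := hα.1
  have hα1 : 1 ≤ α := by linarith
  obtain ⟨ρ, hρ, c, hc, M, d, hd, hgeom⟩ :=
    exists_uniform_geometry hγ₀.contDiff hγ₀.1 hinj hreg
  set K : ℝ := 3 + 1 / (α - 2) with hK
  have hKpos : 0 < K := by
    have : 0 < α - 2 := sub_pos.2 hα2
    positivity
  have hr : 0 < ρ / K := by positivity
  have hball : ∀ γ : ℝ → Rn n, MemH1 ((α - 1) / 2) γ → H1Norm ((α - 1) / 2) (γ - γ₀) < ρ / K →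
      ∀ u, ‖deriv γ u - deriv γ₀ u‖ ≤ ρ := fun γ hγ hγr u => by
    have h := (hγ.sub hγ₀).norm_deriv_le hα2 hr hγr.le u
    rwa [hγ.deriv_sub hγ₀, ← hK, mul_div_cancel₀ _ hKpos.ne'] at h
  obtain ⟨C, hC, hlip⟩ := exists_lipschitz_bound (n := n) (M := M) (d := d) hα1 hc hKpos.le
  refine ⟨ρ / K, hr, C, fun γ hγ hγr => ?_, fun δ hδ X hX hXδ η hη => ?_⟩
  · obtain ⟨h1, h2, -⟩ := hgeom γ hγ.contDiff hγ.1 (hball γ hγ hγr)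
    exact ⟨h1, fun u => norm_pos_iff.1 (hc.trans_le (h2 u))⟩
  obtain ⟨η₀, hη₀, hη₀1, hη₀C⟩ : ∃ η₀ > 0, η₀ ≤ 1 ∧ C * η₀ ≤ η := by
    refine ⟨min 1 (η / (C + 1)), by positivity, min_le_left _ _, ?_⟩
    calc C * min 1 (η / (C + 1)) ≤ (C + 1) * (η / (C + 1)) :=
          mul_le_mul (by linarith) (min_le_right _ _) (by positivity) (by positivity)
      _ = η := mul_div_cancel₀ _ (by positivity)
  obtain ⟨e, he, hsmall⟩ := hXδ η₀ hη₀
  have hθ : 0 < δ + η₀ := add_pos_of_nonneg_of_pos hδ.1 hη₀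
  refine ⟨min e (min d (1 / 2)), by positivity, fun ε₁ hε₁ ε₂ hε₂ f hf g hg hfr hgr => ?_⟩
  wlog hle : ε₁ ≤ ε₂ generalizing ε₁ ε₂
  · have h := this ε₂ hε₂ ε₁ hε₁ (le_of_not_ge hle)
    rw [← abs_neg] at h
    convert h using 2
    ring
  have hfH := hX f hf
  have hgH := hX g hg
  have hεe : ε₂ < e := hε₂.2.trans_le (min_le_left _ _)
  have hεd : ε₂ < d := hε₂.2.trans_le ((min_le_right _ _).trans (min_le_left _ _))
  have hεh : ε₂ ≤ 1 / 2 := (hε₂.2.trans_le ((min_le_right _ _).trans (min_le_right _ _))).le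
  have hkey : ∀ N, H1Norm ((α - 1) / 2) (f - g) < N →
      |(oharaEeps α ε₁ f - oharaEeps α ε₂ f) - (oharaEeps α ε₁ g - oharaEeps α ε₂ g)| ≤
        C * (δ + η₀) * N := fun N hN => by
    have hN0 : 0 < N := (H1Norm_nonneg _ _).trans_lt hN
    refine hlip f g ?_ N (δ + η₀) ε₁ ε₂ hN0 hθ (by linarith [hδ.2]) hε₁.1 hle hεd.le
      (fun u => ?_) ?_
      (hfH.gagliardoNear_le_of_sqrt_le hεh (hsmall ε₂ ⟨hε₂.1, hεe⟩ f hf))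
      (hgH.gagliardoNear_le_of_sqrt_le hεh (hsmall ε₂ ⟨hε₂.1, hεe⟩ g hg))
    · rintro q (rfl | rfl)
      · exact ⟨hfH.contDiff, hfH.1, hgeom _ hfH.contDiff hfH.1 (hball _ hfH hfr)⟩
      · exact ⟨hgH.contDiff, hgH.1, hgeom _ hgH.contDiff hgH.1 (hball _ hgH hgr)⟩
    · have h := (hfH.sub hgH).norm_deriv_le hα2 hN0 hN.le u
      rwa [hfH.deriv_sub hgH] at h
    · rw [← hfH.deriv_sub hgH]
      exact (gagliardoNear_mono hεh _).trans ((hfH.sub hgH).gagliardoNear_le hN.le)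
  have hlim : |(oharaEeps α ε₁ f - oharaEeps α ε₂ f) - (oharaEeps α ε₁ g - oharaEeps α ε₂ g)| ≤
      C * (δ + η₀) * H1Norm ((α - 1) / 2) (f - g) := by
    have ht : Tendsto (fun N => C * (δ + η₀) * N) (𝓝[>] (H1Norm ((α - 1) / 2) (f - g)))
        (𝓝 (C * (δ + η₀) * H1Norm ((α - 1) / 2) (f - g))) :=
      (continuous_const_mul _).continuousWithinAt
    refine ge_of_tendsto ht ?_
    filter_upwards [self_mem_nhdsWithin] with N hN using hkey N hN
  refine hlim.trans (mul_le_mul_of_nonneg_right ?_ (H1Norm_nonneg _ _))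
  rw [mul_add]
  linarith

end
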